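/- Let θ be a proper convex piecewise linear function on ℝ^m, let Φ : ℝ^n × ℝ^d → ℝ^m be C²-smooth around (x̄,w̄) with z̄ := Φ(x̄,w̄) ∈ dom θ, set ψ(x,w) := θ(Φ(x,w)), and assume the second-order qualification condition S(z̄) ∩ ker ∇_xΦ(x̄,w̄)* = {0}. Let q̄ ∈ ∂_xψ(x̄,w̄) and let v̄ be the unique element of M(x̄,w̄,q̄) := {v ∈ ∂θ(z̄) : ∇_xΦ(x̄,w̄)*v = q̄}. Then for every u ∈ ℝ^n the following exact second-order chain rule holds: (D*∂_xψ)(x̄,w̄,q̄)(u) = { (∇²_{xx}⟨v̄,Φ⟩(x̄,w̄)u + ∇_xΦ(x̄,w̄)*y, ∇²_{xw}⟨v̄,Φ⟩(x̄,w̄)u + ∇_wΦ(x̄,w̄)*y) : y ∈ ∂²θ(z̄,v̄)(∇_xΦ(x̄,w̄)u) }, where ⟨v̄,Φ⟩(x,w) := ⟨v̄, Φ(x,w)⟩. -/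

import Mathlib

noncomputable section
open Set Filter Topology Metric
open scoped RealInnerProductSpace Pointwise NNReal Classical

/-- `Euc m` is the Euclidean space `ℝ^m`. -/
abbrev Euc (m : ℕ) := EuclideanSpace ℝ (Fin m)

variable {F G : Type*} [NormedAddCommGroup F] [InnerProductSpace ℝ F]
  [NormedAddCommGroup G] [InnerProductSpace ℝ G]

/-- The (convex) subdifferential of an extended-real-valued function:
`∂θ(z) = {v : θ(z') ≥ θ(z) + ⟨v, z' - z⟩ for all z'}`. -/
def subdiff (θ : F → EReal) (z : F) : Set F :=
  {v | ∀ z', θ z + ((⟪v, z' - z⟫ : ℝ) : EReal) ≤ θ z'}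

/-- The Fréchet (regular) normal cone to `Ω` at `x`:
vectors `v` with `limsup_{y → x, y ∈ Ω} ⟨v, y - x⟩ / ‖y - x‖ ≤ 0`. -/
def frechetNormal (Ω : Set F) (x : F) : Set F :=
  {v | Filter.limsup (fun y => ⟪v, y - x⟫ / ‖y - x‖) (𝓝[Ω] x) ≤ 0}

/-- The limiting (Mordukhovich) normal cone to `Ω` at `x`. -/
def limitingNormal (Ω : Set F) (x : F) : Set F :=
  {v | ∃ xs vs : ℕ → F, (∀ k, xs k ∈ Ω) ∧ Filter.Tendsto xs Filter.atTop (𝓝 x) ∧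
    Filter.Tendsto vs Filter.atTop (𝓝 v) ∧ ∀ k, vs k ∈ frechetNormal Ω (xs k)}

/-- Pairing into the `ℓ²`-product of two inner product spaces. -/
def pl2 (x : F) (y : G) : WithLp 2 (F × G) := (WithLp.equiv 2 (F × G)).symm (x, y)

/-- The second-order subdifferential (generalized Hessian)
`∂²θ(z,v)(u) = {w : (w,-u) ∈ N((z,v); gph ∂θ)}`. -/
def sosd (θ : F → EReal) (z v : F) (u : F) : Set F :=
  {w | pl2 w (-u) ∈ limitingNormal
    {q : WithLp 2 (F × F) | ((WithLp.equiv 2 (F × F)) q).2 ∈ subdiff θ ((WithLp.equiv 2 (F × F)) q).1}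
    (pl2 z v)}

/-- The polyhedral domain `{z : ⟨d i, z⟩ ≤ β i for all i}` of a CPWL function. -/
def cpwlDom {m p : ℕ} (d : Fin p → Euc m) (β : Fin p → ℝ) : Set (Euc m) :=
  {z | ∀ i, ⟪d i, z⟫ ≤ β i}

/-- The CPWL function determined by the data `(a, α, d, β)`:
`θ(z) = max_i (⟨a i, z⟩ - α i)` on its polyhedral domain and `+∞` outside. -/
def cpwlFun {m l p : ℕ} (a : Fin l → Euc m) (α : Fin l → ℝ) (d : Fin p → Euc m)
    (β : Fin p → ℝ) : Euc m → EReal :=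
  fun z => if z ∈ cpwlDom d β then (((⨆ i, (⟪a i, z⟫ - α i)) : ℝ) : EReal) else ⊤

/-- Active indices of the max expression at `z`. -/
def Kact {m l p : ℕ} (a : Fin l → Euc m) (α : Fin l → ℝ) (d : Fin p → Euc m) (β : Fin p → ℝ)
    (z : Euc m) : Set (Fin l) :=
  {i | cpwlFun a α d β z = ((⟪a i, z⟫ - α i : ℝ) : EReal)}

/-- Active indices of the domain inequalities at `z`. -/
def Iact {m p : ℕ} (d : Fin p → Euc m) (β : Fin p → ℝ) (z : Euc m) : Set (Fin p) :=
  {i | ⟪d i, z⟫ = β i}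

/-- Convex conic hull: all finite nonnegative combinations of elements of `s`. -/
def coneHull (s : Set F) : Set F :=
  {x | ∃ (n : ℕ) (c : Fin n → ℝ) (y : Fin n → F), (∀ i, 0 ≤ c i) ∧ (∀ i, y i ∈ s) ∧
    x = ∑ i, c i • y i}

/-- `Spar θ z` is the linear subspace parallel to the affine hull of `∂θ(z)`. -/
def Spar (θ : F → EReal) (z : F) : Submodule ℝ F := (affineSpan ℝ (subdiff θ z)).direction

/-- A convex polyhedron: a finite intersection of closed halfspaces. -/
def IsPolyhedron {V : Type*} [AddCommGroup V] [Module ℝ V] (C : Set V) : Prop :=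
  ∃ (N : ℕ) (f : Fin N → V →ₗ[ℝ] ℝ) (b : Fin N → ℝ), C = {x | ∀ i, f i x ≤ b i}

/-- A proper convex piecewise linear function with values in `ℝ ∪ {+∞}`:
its epigraph is a convex polyhedron, it never takes the value `-∞`, and it is
not identically `+∞`. -/
def IsCPWL {V : Type*} [AddCommGroup V] [Module ℝ V] (f : V → EReal) : Prop :=
  IsPolyhedron {xt : V × ℝ | f xt.1 ≤ (xt.2 : EReal)} ∧ (∀ x, f x ≠ ⊥) ∧ (∃ x, f x ≠ ⊤)

/-- Local argmin set `M_γ(w,v)` of `x ↦ φ(x,w) - ⟨v,x⟩` over the ball `‖x - xb‖ ≤ γ`,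
with the convention that minimizers at which the objective is `+∞` are discarded. -/
def argminLoc {n d : ℕ} (φ : Euc n → Euc d → EReal) (xb : Euc n) (γ : ℝ) (w : Euc d)
    (v : Euc n) : Set (Euc n) :=
  {x | ‖x - xb‖ ≤ γ ∧ φ x w ≠ ⊤ ∧
    ∀ y, ‖y - xb‖ ≤ γ → φ x w - ((⟪v, x⟫ : ℝ) : EReal) ≤ φ y w - ((⟪v, y⟫ : ℝ) : EReal)}

/-- Local optimal value `m_γ(w,v)` of `x ↦ φ(x,w) - ⟨v,x⟩` over the ball `‖x - xb‖ ≤ γ`. -/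
def infLoc {n d : ℕ} (φ : Euc n → Euc d → EReal) (xb : Euc n) (γ : ℝ) (w : Euc d)
    (v : Euc n) : EReal :=
  ⨅ x ∈ {x : Euc n | ‖x - xb‖ ≤ γ}, (φ x w - ((⟪v, x⟫ : ℝ) : EReal))

/-- `xb` is a fully stable locally optimal solution of
`minimize φ(x,wb) - ⟨vb,x⟩` : for some `γ > 0` and neighborhoods `W × V` of `(wb,vb)`,
the local argmin map is single-valued and Lipschitz with value `xb` at `(wb,vb)`, and the
local optimal value function is finite and Lipschitz. -/
def FullyStableSol {n d : ℕ} (φ : Euc n → Euc d → EReal) (xb : Euc n) (wb : Euc d)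
    (vb : Euc n) : Prop :=
  ∃ γ > (0 : ℝ), ∃ W ∈ 𝓝 wb, ∃ V ∈ 𝓝 vb,
    (∃ σ : Euc d × Euc n → Euc n,
      (∃ K : ℝ≥0, LipschitzOnWith K σ (W ×ˢ V)) ∧
      (∀ w ∈ W, ∀ v ∈ V, argminLoc φ xb γ w v = {σ (w, v)}) ∧ σ (wb, vb) = xb) ∧
    (∃ μ : Euc d × Euc n → ℝ,
      (∃ K : ℝ≥0, LipschitzOnWith K μ (W ×ˢ V)) ∧
      ∀ w ∈ W, ∀ v ∈ V, infLoc φ xb γ w v = ((μ (w, v) : ℝ) : EReal))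

/-- The partial limiting subdifferential `∂ₓψ(x,w)` defined through the limiting normal
cone to the epigraph of `ψ(·,w)`. -/
def partialSubdiffX {n d : ℕ} (ψ : Euc n → Euc d → EReal) (x : Euc n) (w : Euc d) :
    Set (Euc n) :=
  {v | ∃ r : ℝ, ψ x w = (r : EReal) ∧
    pl2 v (-1 : ℝ) ∈ limitingNormal
      {q : WithLp 2 (Euc n × ℝ) |
        ψ ((WithLp.equiv 2 (Euc n × ℝ)) q).1 w ≤ ((((WithLp.equiv 2 (Euc n × ℝ)) q).2 : ℝ) : EReal)}
      (pl2 x r)}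

/-- The coderivative `D*∂ₓψ(xb,wb,qb)(u)` of the partial subdifferential mapping,
via the limiting normal cone to its graph in `ℝ^n × ℝ^d × ℝ^n`. -/
def coderivPartialSubdiffX {n d : ℕ} (ψ : Euc n → Euc d → EReal) (xb : Euc n) (wb : Euc d)
    (qb : Euc n) (u : Euc n) : Set (Euc n × Euc d) :=
  {P | pl2 (pl2 P.1 P.2) (-u) ∈ limitingNormal
    {t : WithLp 2 (WithLp 2 (Euc n × Euc d) × Euc n) |
      ((WithLp.equiv 2 (WithLp 2 (Euc n × Euc d) × Euc n)) t).2 ∈ partialSubdiffX ψ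
        ((WithLp.equiv 2 (Euc n × Euc d)) (((WithLp.equiv 2 (WithLp 2 (Euc n × Euc d) × Euc n)) t).1)).1
        ((WithLp.equiv 2 (Euc n × Euc d)) (((WithLp.equiv 2 (WithLp 2 (Euc n × Euc d) × Euc n)) t).1)).2}
    (pl2 (pl2 xb wb) qb)}

/-- Partial Hessian in `x` : the derivative in `x` of the partial gradient in `x`. -/
def hessXX {n d : ℕ} (g : Euc n → Euc d → ℝ) (xb : Euc n) (wb : Euc d) : Euc n →L[ℝ] Euc n :=
  fderiv ℝ (fun x => gradient (fun x' => g x' wb) x) xb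

/-- Mixed partial Hessian: derivative in `w` of the partial gradient in `x`. -/
def hessWX {n d : ℕ} (g : Euc n → Euc d → ℝ) (xb : Euc n) (wb : Euc d) : Euc d →L[ℝ] Euc n :=
  fderiv ℝ (fun w => gradient (fun x' => g x' w) xb) wb

/-!
Near `zb`, a convex piecewise linear `θ` is determined by its restriction to `zb + S(zb)`. Indeed,
let `π` be the orthogonal projection onto this affine subspace and `vb ∈ ∂θ(zb)`. The slopes `a i`
active at `zb` lie in `vb + S(zb)` and the active domain normals `d k` in `S(zb)`, so that
`θ z = θ (π z) + ⟪vb, z - π z⟫`. Hence `epi θ` and `gph ∂θ` are, locally, preimages of sets in lower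
dimension under a linear map `G`, and the qualification condition says exactly that `G ∘ Φ` is a
submersion, although `Φ` itself need not be one. Limiting normals obey an exact preimage rule under
submersions, since these can be linearized by a local diffeomorphism. For the epigraph this gives
`∂ₓψ = ∇ₓΦ* ∂θ(Φ)` near the reference point. The graph of `∂ₓψ` is therefore the image of the
preimage of `gph ∂θ` under `(p, v) ↦ (p, ∇ₓΦ(p)* v)`, which is injective where `v - vb ∈ S`;
completing it to a chart turns this image into a preimage again, and the Hessian terms come from the
derivative of `∇ₓΦ(p)* v` in `p`.
-/

section DualNormals

variable {E H : Type*} [NormedAddCommGroup E] [NormedSpace ℝ E]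
  [NormedAddCommGroup H] [NormedSpace ℝ H]

/-- Fréchet normality of a functional `f` to `Ω` at `x`, i.e.
`limsup_{y → x, y ∈ Ω} f (y - x) / ‖y - x‖ ≤ 0`. Keeping normals in the dual space makes the
calculus independent of a choice of inner product. -/
def IsFrechetNormal (Ω : Set E) (x : E) (f : StrongDual ℝ E) : Prop :=
  (fun y => max (f (y - x)) 0) =o[𝓝[Ω] x] fun y => y - x

/-- The graph of the Fréchet normal cone mapping of `Ω`. -/
def frechetGraph (Ω : Set E) : Set (E × StrongDual ℝ E) :=
  {q | q.1 ∈ Ω ∧ IsFrechetNormal Ω q.1 q.2}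

/-- The limiting normal functionals of `Ω` at `x`: the fibre over `x` of the closure of the graph
of the Fréchet normal cone mapping. -/
def limitingNormals (Ω : Set E) (x : E) : Set (StrongDual ℝ E) :=
  {f | (x, f) ∈ closure (frechetGraph Ω)}

theorem isFrechetNormal_iff_forall_eventually_le {Ω : Set E} {x : E} {f : StrongDual ℝ E} :
    IsFrechetNormal Ω x f ↔ ∀ ε > 0, ∀ᶠ y in 𝓝[Ω] x, f (y - x) ≤ ε * ‖y - x‖ := by
  refine Asymptotics.isLittleO_iff.trans (forall₂_congr fun ε hε => eventually_congr ?_)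
  refine Eventually.of_forall fun y => ?_
  rw [Real.norm_of_nonneg (le_max_right _ _), max_le_iff, and_iff_left (by positivity)]

theorem IsFrechetNormal.mono {Ω Γ : Set E} {x : E} {f : StrongDual ℝ E}
    (h : IsFrechetNormal Γ x f) (hΩ : Ω ⊆ Γ) : IsFrechetNormal Ω x f :=
  Asymptotics.IsLittleO.mono h (nhdsWithin_mono x hΩ)

theorem IsFrechetNormal.comp_hasFDerivAt {ρ : H → E} {ρ' : H →L[ℝ] E} {z : H} {Ω : Set H}
    {Γ : Set E} {f : StrongDual ℝ E} (h : IsFrechetNormal Γ (ρ z) f)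
    (hρ : HasFDerivAt ρ ρ' z) (hmaps : ∀ᶠ y in 𝓝[Ω] z, ρ y ∈ Γ) :
    IsFrechetNormal Ω z (f ∘L ρ') := by
  have htendsto : Tendsto ρ (𝓝[Ω] z) (𝓝[Γ] ρ z) :=
    tendsto_nhdsWithin_iff.2 ⟨hρ.continuousAt.tendsto.mono_left inf_le_left, hmaps⟩
  have hmain := (h.comp_tendsto htendsto).trans_isBigO hρ.hasFDerivWithinAt.isBigO_sub
  have hrest : (fun y => f (ρ y - ρ z - ρ' (y - z))) =o[𝓝[Ω] z] fun y => y - z :=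
    f.isBigO_comp _ _ |>.trans_isLittleO hρ.hasFDerivWithinAt.isLittleO
  refine (Asymptotics.IsBigO.of_norm_le fun y => ?_).trans_isLittleO
    (hmain.add hrest.norm_left)
  have hsplit : f (ρ' (y - z)) = f (ρ y - ρ z) - f (ρ y - ρ z - ρ' (y - z)) := by
    rw [map_sub f (ρ y - ρ z), sub_sub_cancel]
  rw [Real.norm_of_nonneg (le_max_right _ _), ContinuousLinearMap.comp_apply, hsplit]
  refine max_le ?_ (add_nonneg (le_max_right _ _) (norm_nonneg _))
  rw [sub_eq_add_neg]
  exact add_le_add (le_max_left _ _) (neg_le_abs _)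

theorem isFrechetNormal_iff_of_convex {C : Set E} (hC : Convex ℝ C) {x : E} (hx : x ∈ C)
    {f : StrongDual ℝ E} : IsFrechetNormal C x f ↔ ∀ y ∈ C, f (y - x) ≤ 0 := by
  rw [isFrechetNormal_iff_forall_eventually_le]
  constructor
  · intro h y hy
    have hpath : Tendsto (fun τ : ℝ => x + τ • (y - x)) (𝓝[>] 0) (𝓝[C] x) := by
      refine tendsto_nhdsWithin_iff.2 ⟨?_, ?_⟩
      · have hcont : Continuous fun τ : ℝ => x + τ • (y - x) := by fun_prop
        exact (hcont.tendsto' 0 x (by simp)).mono_left inf_le_left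
      · filter_upwards [Ioo_mem_nhdsGT one_pos] with τ hτ
        exact hC.add_smul_sub_mem hx hy ⟨hτ.1.le, hτ.2.le⟩
    have hslope : ∀ ε > 0, f (y - x) ≤ ε * ‖y - x‖ := by
      intro ε hε
      obtain ⟨τ, hτ, hτpos⟩ := ((hpath.eventually (h ε hε)).and self_mem_nhdsWithin).exists
      rw [add_sub_cancel_left, map_smul, norm_smul, Real.norm_of_nonneg (le_of_lt hτpos),
        smul_eq_mul, mul_left_comm] at hτ
      exact le_of_mul_le_mul_left hτ hτpos
    refine ge_of_tendsto (x := 𝓝[>] (0 : ℝ)) (f := fun ε => ε * ‖y - x‖) ?_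
      (eventually_mem_nhdsWithin.mono hslope)
    exact ((continuous_mul_const ‖y - x‖).tendsto' 0 0 (zero_mul _)).mono_left inf_le_left
  · exact fun h ε hε => eventually_mem_nhdsWithin.mono fun y hy => (h y hy).trans (by positivity)

theorem mem_limitingNormals_iff_of_convex {C : Set E} (hC : Convex ℝ C) {x : E} (hx : x ∈ C)
    {f : StrongDual ℝ E} : f ∈ limitingNormals C x ↔ ∀ y ∈ C, f (y - x) ≤ 0 := by
  refine ⟨fun hf => ?_, fun h => subset_closure ⟨hx, (isFrechetNormal_iff_of_convex hC hx).2 h⟩⟩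
  have hsub : frechetGraph C ⊆ {q | ∀ y ∈ C, q.2 (y - q.1) ≤ 0} :=
    fun q hq => (isFrechetNormal_iff_of_convex hC hq.1).1 hq.2
  refine closure_minimal hsub ?_ hf
  simp only [ofPred_forall]
  exact isClosed_biInter fun y _ => isClosed_le (by fun_prop) continuous_const

end DualNormals

section PreimageRule

variable {E H : Type*} [NormedAddCommGroup E] [NormedSpace ℝ E]
  [NormedAddCommGroup H] [NormedSpace ℝ H]

theorem exists_linearization [CompleteSpace E] {Φ : E → H} {Φ' : E →L[ℝ] H} {t : E}
    (hΦ : HasStrictFDerivAt Φ Φ' t) {R : H →L[ℝ] E} (hR : Φ' ∘L R = ContinuousLinearMap.id ℝ H) :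
    ∃ N : E → E, N t = t ∧ HasFDerivAt N (ContinuousLinearMap.id ℝ E) t ∧
      ∀ᶠ e in 𝓝 t, Φ (N e) = Φ t + Φ' (e - t) := by
  -- `N` is the local inverse of `M`, for which `Φ' (M e - t) = Φ e - Φ t`.
  let M : E → E := fun e => e + R (Φ e - Φ t - Φ' (e - t))
  have hMt : M t = t := by simp only [M, sub_self, map_zero, add_zero]
  have hM : HasStrictFDerivAt M (ContinuousLinearEquiv.refl ℝ E : E →L[ℝ] E) t := by
    have hrest : HasStrictFDerivAt (fun e => Φ e - Φ t - Φ' (e - t)) (Φ' - Φ') t :=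
      (hΦ.sub_const _).sub (Φ'.hasStrictFDerivAt.comp t ((hasStrictFDerivAt_id t).sub_const t))
    rw [sub_self] at hrest
    have hsum := (hasStrictFDerivAt_id (𝕜 := ℝ) t).add (R.hasStrictFDerivAt.comp t hrest)
    rwa [ContinuousLinearMap.comp_zero, add_zero] at hsum
  have hlocal := hM.to_localInverse.hasFDerivAt
  have hinv := hM.eventually_right_inverse
  rw [hMt] at hlocal hinv
  refine ⟨hM.localInverse M _ t, ?_, hlocal, hinv.mono fun e he => ?_⟩
  · simpa only [hMt] using hM.localInverse_apply_image
  · generalize hM.localInverse M _ t e = e' at he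
    have hR' : ∀ y, Φ' (R y) = y := fun y => congr($hR y)
    rw [← he, map_sub, map_add, hR', map_sub]
    abel

theorem IsFrechetNormal.of_affine_preimage {Φ' : E →L[ℝ] H} {t : E} {z : H} {R : H →L[ℝ] E}
    (hR : Φ' ∘L R = ContinuousLinearMap.id ℝ H) {Ω : Set H} (hz : z ∈ Ω) {f : StrongDual ℝ E}
    (hf : IsFrechetNormal {e | z + Φ' (e - t) ∈ Ω} t f) :
    IsFrechetNormal Ω z (f ∘L R) ∧ f = (f ∘L R) ∘L Φ' := by
  have hR' : ∀ y, Φ' (R y) = y := fun y => congr($hR y)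
  constructor
  · have hρ : HasFDerivAt (fun y => t + R (y - z)) R z :=
      (R.hasFDerivAt.comp z ((hasFDerivAt_id z).sub_const z)).const_add t
    refine IsFrechetNormal.comp_hasFDerivAt (by simpa only [sub_self, map_zero, add_zero] using hf)
      hρ (eventually_mem_nhdsWithin.mono fun y hy => ?_)
    simpa only [mem_ofPred_eq, add_sub_cancel_left, hR', add_sub_cancel] using hy
  · have hconvex : Convex ℝ (Φ' ⁻¹' {Φ' t}) :=
      (convex_singleton (Φ' t)).linear_preimage Φ'.toLinearMap
    have hfiber : IsFrechetNormal (Φ' ⁻¹' {Φ' t}) t f :=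
      hf.mono fun e he => by
        rwa [mem_ofPred_eq, map_sub, mem_singleton_iff.1 he, sub_self, add_zero]
    rw [isFrechetNormal_iff_of_convex hconvex rfl] at hfiber
    have hker : ∀ k, Φ' k = 0 → f k ≤ 0 := fun k hk => by
      simpa only [add_sub_cancel_left] using hfiber (t + k) (by simpa using hk)
    ext e
    have hle := hker (e - R (Φ' e)) (by rw [map_sub, hR', sub_self])
    have hge := hker (R (Φ' e) - e) (by rw [map_sub, hR', sub_self])
    rw [map_sub] at hle hge
    exact le_antisymm (sub_nonpos.1 hle) (sub_nonpos.1 hge)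

theorem IsFrechetNormal.of_preimage [CompleteSpace E] {Φ : E → H} {Φ' : E →L[ℝ] H} {t : E}
    (hΦ : HasStrictFDerivAt Φ Φ' t) {R : H →L[ℝ] E} (hR : Φ' ∘L R = ContinuousLinearMap.id ℝ H)
    {Γ : Set E} {Ω : Set H} (hΓ : ∀ᶠ x in 𝓝 t, x ∈ Γ ↔ Φ x ∈ Ω) (ht : t ∈ Γ)
    {f : StrongDual ℝ E} (hf : IsFrechetNormal Γ t f) :
    IsFrechetNormal Ω (Φ t) (f ∘L R) ∧ f = (f ∘L R) ∘L Φ' := by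
  obtain ⟨N, hNt, hN, hlin⟩ := exists_linearization hΦ hR
  have hNtendsto : Tendsto N (𝓝 t) (𝓝 t) := by simpa only [hNt] using hN.continuousAt.tendsto
  refine IsFrechetNormal.of_affine_preimage hR (hΓ.self_of_nhds.1 ht) (t := t) ?_
  rw [← hNt] at hf
  refine hf.comp_hasFDerivAt hN ?_
  filter_upwards [self_mem_nhdsWithin, nhdsWithin_le_nhds hlin,
    nhdsWithin_le_nhds (hNtendsto.eventually hΓ)] with e he hNe hiff
  rwa [hiff, hNe]

theorem exists_continuousAt_rightInverse [CompleteSpace H] {X : Type*} [TopologicalSpace X]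
    {A : X → E →L[ℝ] H} {t : X} (hA : ContinuousAt A t) {R : H →L[ℝ] E}
    (hR : A t ∘L R = ContinuousLinearMap.id ℝ H) :
    ∃ R' : X → H →L[ℝ] E, ContinuousAt R' t ∧
      ∀ᶠ x in 𝓝 t, A x ∘L R' x = ContinuousLinearMap.id ℝ H := by
  have hone : A t ∘L R = ((1 : (H →L[ℝ] H)ˣ) : H →L[ℝ] H) := hR
  have hAR : ContinuousAt (fun x => A x ∘L R) t := by fun_prop
  refine ⟨fun x => R ∘L Ring.inverse (A x ∘L R), ?_, ?_⟩
  · have hinv : ContinuousAt (fun x => Ring.inverse (A x ∘L R)) t :=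
      ContinuousAt.comp' (f := fun x => A x ∘L R)
        (by rw [hone]; exact NormedRing.inverse_continuousAt 1) hAR
    fun_prop
  · filter_upwards [hAR.eventually_mem (Units.isOpen.mem_nhds ⟨1, hone.symm⟩)] with x hx
    exact Ring.mul_inverse_cancel _ hx

theorem exists_mem_limitingNormals_of_preimage [CompleteSpace E] [FiniteDimensional ℝ H]
    {Φ : E → H} {Φ' : E →L[ℝ] H} {t : E} (hΦ : ContDiffAt ℝ 1 Φ t) (hΦ' : HasFDerivAt Φ Φ' t)
    (hsurj : Φ'.range = ⊤) {Γ : Set E} {Ω : Set H} (hΓ : ∀ᶠ x in 𝓝 t, x ∈ Γ ↔ Φ x ∈ Ω)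
    {f : StrongDual ℝ E} (hf : f ∈ limitingNormals Γ t) :
    ∃ g ∈ limitingNormals Ω (Φ t), f = g ∘L Φ' := by
  obtain ⟨R, hR⟩ := Φ'.exists_rightInverse_of_surjective hsurj
  rw [← hΦ'.fderiv] at hR ⊢
  have hcont : ContinuousAt (fderiv ℝ Φ) t := hΦ.continuousAt_fderiv one_ne_zero
  obtain ⟨R', hR'cont, hR'⟩ := exists_continuousAt_rightInverse hcont hR
  have hpull : ∀ᶠ q : E × StrongDual ℝ E in 𝓝 (t, f), q ∈ frechetGraph Γ →
      (Φ q.1, q.2 ∘L R' q.1) ∈ frechetGraph Ω ∧ (q.2 ∘L R' q.1) ∘L fderiv ℝ Φ q.1 = q.2 := by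
    filter_upwards [continuousAt_fst.eventually (hΓ.eventually_nhds),
      continuousAt_fst.eventually hR',
      continuousAt_fst.eventually (hΦ.eventually (by simp))] with q hqΓ hqR hqΦ hq
    have h := hq.2.of_preimage (hqΦ.hasStrictFDerivAt one_ne_zero) hqR hqΓ hq.1
    exact ⟨⟨hqΓ.self_of_nhds.1 hq.1, h.1⟩, h.2.symm⟩
  have hfreq := (mem_closure_iff_frequently.1 hf).and_eventually hpull |>.mono
    fun q hq => hq.2 hq.1
  have hg : ContinuousAt (fun q : E × StrongDual ℝ E => q.2 ∘L R' q.1) (t, f) :=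
    continuousAt_snd.clm_comp (hR'cont.comp_of_eq continuousAt_fst rfl)
  have hΦfst : ContinuousAt (fun q : E × StrongDual ℝ E => Φ q.1) (t, f) :=
    hΦ.continuousAt.comp_of_eq continuousAt_fst rfl
  have hfactor : ContinuousAt
      (fun q : E × StrongDual ℝ E => (q.2 ∘L R' q.1) ∘L fderiv ℝ Φ q.1) (t, f) :=
    hg.clm_comp (hcont.comp_of_eq continuousAt_fst rfl)
  exact ⟨f ∘L R' t,
    mem_closure_iff_frequently.2 ((hΦfst.prodMk hg).frequently (hfreq.mono fun q hq => hq.1)),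
    tendsto_nhds_unique_of_frequently_eq (continuousAt_snd (p := (t, f))) hfactor
      (hfreq.mono fun q hq => hq.2.symm)⟩

theorem comp_mem_limitingNormals_preimage [CompleteSpace E] [CompleteSpace H]
    {Φ : E → H} {Φ' : E →L[ℝ] H} {t : E} (hΦ : ContDiffAt ℝ 1 Φ t) (hΦ' : HasFDerivAt Φ Φ' t)
    (hsurj : Φ'.range = ⊤) {Γ : Set E} {Ω : Set H} (hΓ : ∀ᶠ x in 𝓝 t, x ∈ Γ ↔ Φ x ∈ Ω)
    {g : StrongDual ℝ H} (hg : g ∈ limitingNormals Ω (Φ t)) :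
    g ∘L Φ' ∈ limitingNormals Γ t := by
  rw [← hΦ'.fderiv] at hsurj ⊢
  have hopen : map (Prod.map Φ id) (𝓝 (t, g)) = 𝓝 (Φ t, g) := by
    rw [nhds_prod_eq, nhds_prod_eq, ← prod_map_map_eq',
      (hΦ.hasStrictFDerivAt one_ne_zero).map_nhds_eq_of_surj hsurj, map_id]
  have hlift : ∃ᶠ q in 𝓝 (t, g), (Φ q.1, q.2) ∈ frechetGraph Ω := by
    have hfreq := mem_closure_iff_frequently.1 hg
    rwa [← hopen, frequently_map] at hfreq
  have hpull : ∀ᶠ q : E × StrongDual ℝ H in 𝓝 (t, g), (Φ q.1, q.2) ∈ frechetGraph Ω →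
      (q.1, q.2 ∘L fderiv ℝ Φ q.1) ∈ frechetGraph Γ := by
    filter_upwards [continuousAt_fst.eventually hΓ.eventually_nhds,
      continuousAt_fst.eventually (hΦ.eventually (by simp))] with q hqΓ hqΦ hq
    refine ⟨hqΓ.self_of_nhds.2 hq.1, IsFrechetNormal.comp_hasFDerivAt (ρ := Φ) hq.2
      (hqΦ.differentiableAt one_ne_zero).hasFDerivAt ?_⟩
    filter_upwards [self_mem_nhdsWithin, nhdsWithin_le_nhds hqΓ] with y hy hiff
    exact hiff.1 hy
  have hcont : ContinuousAt (fderiv ℝ Φ) t := hΦ.continuousAt_fderiv one_ne_zero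
  have htendsto : Tendsto (fun q : E × StrongDual ℝ H => (q.1, q.2 ∘L fderiv ℝ Φ q.1))
      (𝓝 (t, g)) (𝓝 (t, g ∘L fderiv ℝ Φ t)) :=
    continuousAt_fst.prodMk
      (continuousAt_snd.clm_comp (hcont.comp_of_eq continuousAt_fst rfl))
  exact mem_closure_iff_frequently.2 <| htendsto.frequently <|
    (hlift.and_eventually hpull).mono fun q hq => hq.2 hq.1

theorem mem_limitingNormals_preimage_iff [CompleteSpace E] [FiniteDimensional ℝ H]
    {Φ : E → H} {Φ' : E →L[ℝ] H} {t : E} (hΦ : ContDiffAt ℝ 1 Φ t) (hΦ' : HasFDerivAt Φ Φ' t)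
    (hsurj : Φ'.range = ⊤) {Γ : Set E} {Ω : Set H} (hΓ : ∀ᶠ x in 𝓝 t, x ∈ Γ ↔ Φ x ∈ Ω)
    {f : StrongDual ℝ E} :
    f ∈ limitingNormals Γ t ↔ ∃ g ∈ limitingNormals Ω (Φ t), f = g ∘L Φ' := by
  refine ⟨exists_mem_limitingNormals_of_preimage hΦ hΦ' hsurj hΓ, ?_⟩
  rintro ⟨g, hg, rfl⟩
  exact comp_mem_limitingNormals_preimage hΦ hΦ' hsurj hΓ hg

end PreimageRule

section ChainRule

variable {E K H : Type*} [NormedAddCommGroup E] [NormedSpace ℝ E]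
  [NormedAddCommGroup K] [NormedSpace ℝ K] [NormedAddCommGroup H] [NormedSpace ℝ H]

theorem comp_mem_limitingNormals_preimage_iff [CompleteSpace E] [FiniteDimensional ℝ H]
    {Φ : E → H} {Φ' : E →L[ℝ] H} {t : E} (hΦ : ContDiffAt ℝ 1 Φ t) (hΦ' : HasFDerivAt Φ Φ' t)
    (hsurj : Φ'.range = ⊤) {Γ : Set E} {Ω : Set H} (hΓ : ∀ᶠ x in 𝓝 t, x ∈ Γ ↔ Φ x ∈ Ω)
    {g : StrongDual ℝ H} : g ∘L Φ' ∈ limitingNormals Γ t ↔ g ∈ limitingNormals Ω (Φ t) := by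
  rw [mem_limitingNormals_preimage_iff hΦ hΦ' hsurj hΓ]
  refine ⟨?_, fun hg => ⟨g, hg, rfl⟩⟩
  rintro ⟨g', hg', hcomp⟩
  have heq : g = g' := by
    ext z
    obtain ⟨e, rfl⟩ := LinearMap.range_eq_top.1 hsurj z
    exact congr($hcomp e)
  rwa [heq]

/-- The chain rule behind every exact formula in this development: if `Ω` is locally the preimage
of a set under `G`, it is enough that `G ∘ φ`, rather than `φ` itself, is a submersion. -/
theorem mem_limitingNormals_preimage_iff_of_reduction [CompleteSpace E] [CompleteSpace K]
    [FiniteDimensional ℝ H] {φ : E → K} {φ' : E →L[ℝ] K} {x : E} (hφ : ContDiffAt ℝ 1 φ x)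
    (hφ' : HasFDerivAt φ φ' x) {G : K → H} {G' : K →L[ℝ] H} (hG : ContDiffAt ℝ 1 G (φ x))
    (hG' : HasFDerivAt G G' (φ x)) (hsurj : (G' ∘L φ').range = ⊤) {C : Set H} {Ω : Set K}
    (hΩ : ∀ᶠ z in 𝓝 (φ x), z ∈ Ω ↔ G z ∈ C) {Γ : Set E} (hΓ : ∀ᶠ y in 𝓝 x, y ∈ Γ ↔ φ y ∈ Ω)
    {f : StrongDual ℝ E} :
    f ∈ limitingNormals Γ x ↔ ∃ g ∈ limitingNormals Ω (φ x), f = g ∘L φ' := by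
  have hsurjG : G'.range = ⊤ := by
    refine LinearMap.range_eq_top.2 (Function.Surjective.of_comp (g := φ') ?_)
    exact LinearMap.range_eq_top.1 hsurj
  have hΓC : ∀ᶠ y in 𝓝 x, y ∈ Γ ↔ G (φ y) ∈ C := by
    filter_upwards [hΓ, hφ.continuousAt.eventually hΩ] with y hyΓ hyΩ
    exact hyΓ.trans hyΩ
  rw [mem_limitingNormals_preimage_iff (hG.comp x hφ) (hG'.comp x hφ') hsurj hΓC]
  simp only [mem_limitingNormals_preimage_iff hG hG' hsurjG hΩ]
  constructor
  · rintro ⟨h, hh, rfl⟩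
    exact ⟨h ∘L G', ⟨h, hh, rfl⟩, rfl⟩
  · rintro ⟨_, ⟨h, hh, rfl⟩, rfl⟩
    exact ⟨h, hh, rfl⟩

end ChainRule

section Products

variable {E H : Type*} [NormedAddCommGroup E] [NormedSpace ℝ E]
  [NormedAddCommGroup H] [NormedSpace ℝ H]

theorem IsFrechetNormal.coprod {Ω : Set E} {Ω' : Set H} {x : E} {y : H} {f : StrongDual ℝ E}
    {g : StrongDual ℝ H} (hf : IsFrechetNormal Ω x f) (hg : IsFrechetNormal Ω' y g) :
    IsFrechetNormal (Ω ×ˢ Ω') (x, y) (f.coprod g) := by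
  have hf' := IsFrechetNormal.comp_hasFDerivAt (z := (x, y)) (Ω := Ω ×ˢ Ω') hf hasFDerivAt_fst
    (eventually_mem_nhdsWithin.mono fun _ hq => hq.1)
  have hg' := IsFrechetNormal.comp_hasFDerivAt (z := (x, y)) (Ω := Ω ×ˢ Ω') hg hasFDerivAt_snd
    (eventually_mem_nhdsWithin.mono fun _ hq => hq.2)
  refine (Asymptotics.IsBigO.of_norm_le fun q => ?_).trans_isLittleO (hf'.add hg')
  rw [Real.norm_of_nonneg (le_max_right _ _)]
  exact max_le (add_le_add (le_max_left _ _) (le_max_left _ _))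
    (add_nonneg (le_max_right _ _) (le_max_right _ _))

theorem mem_limitingNormals_prod_iff {Ω : Set E} {Ω' : Set H} {x : E} {y : H}
    {f : StrongDual ℝ (E × H)} :
    f ∈ limitingNormals (Ω ×ˢ Ω') (x, y) ↔
      f ∘L ContinuousLinearMap.inl ℝ E H ∈ limitingNormals Ω x ∧
        f ∘L ContinuousLinearMap.inr ℝ E H ∈ limitingNormals Ω' y := by
  constructor
  · intro hf
    constructor
    · refine map_mem_closure (f := fun q : (E × H) × StrongDual ℝ (E × H) =>
        (q.1.1, q.2 ∘L ContinuousLinearMap.inl ℝ E H)) (by fun_prop) hf ?_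
      rintro ⟨⟨e, h⟩, f'⟩ ⟨⟨he, hh⟩, hf'⟩
      exact ⟨he, IsFrechetNormal.comp_hasFDerivAt hf' (hasFDerivAt_prodMk_left e h)
        (eventually_mem_nhdsWithin.mono fun _ he' => mk_mem_prod he' hh)⟩
    · refine map_mem_closure (f := fun q : (E × H) × StrongDual ℝ (E × H) =>
        (q.1.2, q.2 ∘L ContinuousLinearMap.inr ℝ E H)) (by fun_prop) hf ?_
      rintro ⟨⟨e, h⟩, f'⟩ ⟨⟨he, hh⟩, hf'⟩
      exact ⟨hh, IsFrechetNormal.comp_hasFDerivAt hf' (hasFDerivAt_prodMk_right e h)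
        (eventually_mem_nhdsWithin.mono fun _ hh' => mk_mem_prod he hh')⟩
  · rintro ⟨hfst, hsnd⟩
    have hmem : ((x, f ∘L ContinuousLinearMap.inl ℝ E H),
        (y, f ∘L ContinuousLinearMap.inr ℝ E H)) ∈ closure (frechetGraph Ω ×ˢ frechetGraph Ω') := by
      rw [closure_prod_eq]
      exact ⟨hfst, hsnd⟩
    have hcont : Continuous fun q : (E × StrongDual ℝ E) × (H × StrongDual ℝ H) =>
        ((q.1.1, q.2.1), q.1.2.coprod q.2.2) := by
      simp only [← ContinuousLinearMap.comp_fst_add_comp_snd]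
      fun_prop
    have hmap := map_mem_closure (t := frechetGraph (Ω ×ˢ Ω')) hcont hmem
      fun q hq => ⟨⟨hq.1.1, hq.2.1⟩, hq.1.2.coprod hq.2.2⟩
    rwa [ContinuousLinearMap.coprod_comp_inl_inr] at hmap

end Products

section InnerProduct

variable {X : Type*} [NormedAddCommGroup X] [InnerProductSpace ℝ X]

theorem mem_frechetNormal_iff {Ω : Set X} {x : X} (hx : x ∈ Ω) {v : X} :
    v ∈ frechetNormal Ω x ↔ IsFrechetNormal Ω x (innerSL ℝ v) := by
  have hne : (𝓝[Ω] x).NeBot := mem_closure_iff_nhdsWithin_neBot.1 (subset_closure hx)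
  have hbound : ∀ y, |⟪v, y - x⟫ / ‖y - x‖| ≤ ‖v‖ := fun y => by
    rw [abs_div, abs_norm]
    exact div_le_of_le_mul₀ (norm_nonneg _) (norm_nonneg _) (abs_real_inner_le_norm _ _)
  have hbdd : IsBoundedUnder (· ≤ ·) (𝓝[Ω] x) fun y => ⟪v, y - x⟫ / ‖y - x‖ :=
    isBoundedUnder_of ⟨_, fun y => (abs_le.1 (hbound y)).2⟩
  have hcobdd : IsCoboundedUnder (· ≤ ·) (𝓝[Ω] x) fun y => ⟪v, y - x⟫ / ‖y - x‖ :=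
    IsBoundedUnder.isCoboundedUnder_le (isBoundedUnder_of ⟨_, fun y => (abs_le.1 (hbound y)).1⟩)
  rw [isFrechetNormal_iff_forall_eventually_le]
  refine (limsup_le_iff hcobdd hbdd).trans ⟨fun h ε hε => (h ε hε).mono fun y hy => ?_,
    fun h ε hε => (h (ε / 2) (half_pos hε)).mono fun y hy => ?_⟩
  · rw [innerSL_apply_apply]
    obtain hyx | hyx := (norm_nonneg (y - x)).eq_or_lt
    · rw [norm_eq_zero.1 hyx.symm, inner_zero_right, norm_zero, mul_zero]
    · exact ((div_lt_iff₀ hyx).1 hy).le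
  · exact (div_le_of_le_mul₀ (norm_nonneg _) (half_pos hε).le hy).trans_lt (half_lt_self hε)

theorem mem_limitingNormal_iff [CompleteSpace X] {Ω : Set X} {x v : X} :
    v ∈ limitingNormal Ω x ↔ innerSL ℝ v ∈ limitingNormals Ω x := by
  constructor
  · rintro ⟨xs, vs, hxs, hx, hv, hnormal⟩
    exact mem_closure_iff_seq_limit.2 ⟨fun k => (xs k, innerSL ℝ (vs k)),
      fun k => ⟨hxs k, (mem_frechetNormal_iff (hxs k)).1 (hnormal k)⟩,
      hx.prodMk_nhds (((innerSL ℝ).continuous.tendsto v).comp hv)⟩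
  · intro h
    obtain ⟨qs, hqs, hlim⟩ := mem_closure_iff_seq_limit.1 h
    have hriesz : ∀ f : StrongDual ℝ X, innerSL ℝ ((InnerProductSpace.toDual ℝ X).symm f) = f :=
      (InnerProductSpace.toDual ℝ X).apply_symm_apply
    refine ⟨fun k => (qs k).1, fun k => (InnerProductSpace.toDual ℝ X).symm (qs k).2,
      fun k => (hqs k).1, hlim.fst_nhds, ?_, fun k => ?_⟩
    · rw [← (InnerProductSpace.toDual ℝ X).symm_apply_apply v]
      exact ((InnerProductSpace.toDual ℝ X).symm.continuous.tendsto _).comp hlim.snd_nhds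
    · rw [mem_frechetNormal_iff (hqs k).1, hriesz]
      exact (hqs k).2

theorem mem_limitingNormal_apply_iff {E : Type*} [NormedAddCommGroup E] [NormedSpace ℝ E]
    [CompleteSpace E] [FiniteDimensional ℝ X] (e : E ≃L[ℝ] X) {Ω : Set X} {x : E} {v : X} :
    v ∈ limitingNormal Ω (e x) ↔ innerSL ℝ v ∘L e ∈ limitingNormals (e ⁻¹' Ω) x := by
  rw [mem_limitingNormal_iff]
  exact (comp_mem_limitingNormals_preimage_iff e.contDiff.contDiffAt e.hasFDerivAt
    (LinearMap.range_eq_top.2 e.surjective) (Eventually.of_forall fun _ => Iff.rfl)).symm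

/-- The functional `(x, y) ↦ ⟪a, x⟫ + ⟪b, y⟫`: the dual counterpart of `pl2 a b`. -/
def innerPair (a : F) (b : G) : StrongDual ℝ (F × G) := (innerSL ℝ a).coprod (innerSL ℝ b)

theorem innerPair_apply (a : F) (b : G) (q : F × G) :
    innerPair a b q = ⟪a, q.1⟫ + ⟪b, q.2⟫ := rfl

theorem pl2_mem_limitingNormal_iff [FiniteDimensional ℝ F] [FiniteDimensional ℝ G]
    {Ω : Set (WithLp 2 (F × G))} {x a : F} {y b : G} :
    pl2 a b ∈ limitingNormal Ω (pl2 x y) ↔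
      innerPair a b ∈ limitingNormals {q | pl2 q.1 q.2 ∈ Ω} (x, y) := by
  have : CompleteSpace G := FiniteDimensional.complete ℝ G
  have : FiniteDimensional ℝ (WithLp 2 (F × G)) :=
    (WithLp.prodContinuousLinearEquiv 2 ℝ F G).symm.toLinearEquiv.finiteDimensional
  exact mem_limitingNormal_apply_iff (WithLp.prodContinuousLinearEquiv 2 ℝ F G).symm (x := (x, y))

end InnerProduct

section Subgradients

theorem innerPair_inj {a a' : F} {b b' : G} :
    innerPair a b = innerPair a' b' ↔ a = a' ∧ b = b' := by
  refine ⟨fun h => ⟨ext_inner_right ℝ fun x => ?_, ext_inner_right ℝ fun y => ?_⟩, ?_⟩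
  · simpa [innerPair_apply] using congr($h (x, 0))
  · simpa [innerPair_apply] using congr($h (0, y))
  · rintro ⟨rfl, rfl⟩
    rfl

theorem exists_eq_innerPair [CompleteSpace F] [CompleteSpace G] (g : StrongDual ℝ (F × G)) :
    ∃ a b, g = innerPair a b := by
  obtain ⟨a, ha⟩ := (InnerProductSpace.toDual ℝ F).surjective (g ∘L ContinuousLinearMap.inl ℝ F G)
  obtain ⟨b, hb⟩ := (InnerProductSpace.toDual ℝ G).surjective (g ∘L ContinuousLinearMap.inr ℝ F G)
  refine ⟨a, b, ?_⟩
  rw [← g.coprod_comp_inl_inr, ← ha, ← hb]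
  rfl

theorem innerPair_comp_prodMap {E : Type*} [NormedAddCommGroup E] [InnerProductSpace ℝ E]
    [CompleteSpace E] [CompleteSpace F] (A : E →L[ℝ] F) (v : F) (b : G) :
    innerPair v b ∘L A.prodMap (ContinuousLinearMap.id ℝ G) = innerPair (A.adjoint v) b := by
  ext q <;> simp [innerPair_apply, ContinuousLinearMap.adjoint_inner_left]

/-- The epigraph of an extended-real-valued function. -/
def epi {E : Type*} (θ : E → EReal) : Set (E × ℝ) := {p | θ p.1 ≤ p.2}

theorem innerPair_neg_one_apply_le_zero_iff {v x : F} {ρ : ℝ} :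
    innerPair v (-1 : ℝ) (x, ρ) ≤ 0 ↔ ⟪v, x⟫ ≤ ρ := by
  simp [innerPair_apply]

theorem innerPair_neg_one_mem_limitingNormals_epi_iff {θ : F → EReal} (hθ : Convex ℝ (epi θ))
    {z v : F} {r : ℝ} (hr : θ z = r) :
    innerPair v (-1 : ℝ) ∈ limitingNormals (epi θ) (z, r) ↔ v ∈ subdiff θ z := by
  rw [mem_limitingNormals_iff_of_convex hθ (show (z, r) ∈ epi θ from hr.le)]
  simp only [subdiff, mem_ofPred_eq, hr, Prod.forall, Prod.mk_sub_mk,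
    innerPair_neg_one_apply_le_zero_iff, ← EReal.coe_add]
  refine forall_congr' fun z' => ⟨fun h => ?_, fun h ρ hρ => ?_⟩
  · refine EReal.le_of_forall_lt_iff_le.1 fun ρ hρ => EReal.coe_le_coe_iff.2 ?_
    linarith [h ρ hρ.le]
  · linarith [EReal.coe_le_coe_iff.1 (h.trans hρ)]

theorem ne_top_of_mem_subdiff {θ : F → EReal} {z₀ z v : F} (hz₀ : θ z₀ ≠ ⊤)
    (hv : v ∈ subdiff θ z) : θ z ≠ ⊤ := fun hz => by
  have hle := hv z₀
  rw [hz, EReal.top_add_coe, top_le_iff] at hle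
  exact hz₀ hle

end Subgradients

section Splitting

/-- The orthogonal projection of `z` onto the affine subspace `zb + S`. -/
def affineProj (S : Submodule ℝ F) [S.HasOrthogonalProjection] (zb z : F) : F :=
  zb + S.starProjection (z - zb)

theorem tendsto_affineProj (S : Submodule ℝ F) [S.HasOrthogonalProjection] (zb : F) :
    Tendsto (affineProj S zb) (𝓝 zb) (𝓝 zb) := by
  have hcont : Continuous (affineProj S zb) := by
    unfold affineProj
    fun_prop
  exact hcont.tendsto' _ _ (by simp [affineProj])

/-- The value of `θ` at `z` is its value at the projection of `z` onto `zb + S`, corrected by the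
linear functional `⟪vb, ·⟫`. A convex piecewise linear `θ` satisfies this near `zb` for
`S = Spar θ zb` and `vb ∈ subdiff θ zb`. -/
def SplitsAt (θ : F → EReal) (S : Submodule ℝ F) [S.HasOrthogonalProjection] (zb vb z : F) :
    Prop :=
  θ z = θ (affineProj S zb z) + (⟪vb, z - affineProj S zb z⟫ : ℝ)

/-- The linear map `(z, r) ↦ (P_S z, r - ⟪vb, z - P_S z⟫)`, which reduces the epigraph of a
function splitting along `S` to a subset of `S × ℝ`. -/
def epiReduction (S : Submodule ℝ F) [S.HasOrthogonalProjection] (vb : F) :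
    F × ℝ →L[ℝ] S × ℝ :=
  (S.orthogonalProjectionOnto ∘L ContinuousLinearMap.fst ℝ F ℝ).prod
    (ContinuousLinearMap.snd ℝ F ℝ -
      innerSL ℝ vb ∘L (1 - S.starProjection) ∘L ContinuousLinearMap.fst ℝ F ℝ)

theorem epiReduction_apply (S : Submodule ℝ F) [S.HasOrthogonalProjection] (vb z : F) (r : ℝ) :
    epiReduction S vb (z, r) = (S.orthogonalProjectionOnto z, r - ⟪vb, z - S.starProjection z⟫) :=
  rfl

variable {θ : F → EReal} {S : Submodule ℝ F} [S.HasOrthogonalProjection] {zb vb : F}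

theorem inner_affineProj_of_mem {s : F} (hs : s ∈ S) (zb z : F) :
    ⟪s, affineProj S zb z⟫ = ⟪s, z⟫ := by
  have hzero := Submodule.inner_right_of_mem_orthogonal hs
    (S.sub_starProjection_mem_orthogonal (z - zb))
  rw [inner_sub_right, inner_sub_right] at hzero
  rw [affineProj, inner_add_right]
  linarith

theorem splitsAt_of_forall_le_coe_iff {z : F}
    (h : ∀ r : ℝ, θ z ≤ r ↔ θ (affineProj S zb z) ≤ (r - ⟪vb, z - affineProj S zb z⟫ : ℝ)) :
    SplitsAt θ S zb vb z := by
  have h' : ∀ r : ℝ, θ z ≤ r ↔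
      θ (affineProj S zb z) + (⟪vb, z - affineProj S zb z⟫ : ℝ) ≤ r := fun r => by
    rw [h, EReal.coe_sub,
      EReal.le_sub_iff_add_le (.inl (EReal.coe_ne_bot _)) (.inl (EReal.coe_ne_top _))]
  exact le_antisymm (EReal.le_of_forall_lt_iff_le.1 fun r hr => (h' r).2 hr.le)
    (EReal.le_of_forall_lt_iff_le.1 fun r hr => (h' r).1 hr.le)

theorem SplitsAt.mem_epi_iff {z : F} (h : SplitsAt θ S zb vb z) (r : ℝ) :
    (z, r) ∈ epi θ ↔
      epiReduction S vb ((z, r) - (zb, 0)) ∈ {t : S × ℝ | θ (zb + t.1) ≤ t.2} := by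
  have hcorr : z - affineProj S zb z = z - zb - S.starProjection (z - zb) := by
    rw [affineProj, sub_add_eq_sub_sub]
  rw [epi, mem_ofPred_eq, h, hcorr, Prod.mk_sub_mk, sub_zero, epiReduction_apply, mem_ofPred_eq,
    EReal.coe_sub, EReal.le_sub_iff_add_le (.inl (EReal.coe_ne_bot _)) (.inl (EReal.coe_ne_top _))]
  rfl

theorem eventually_mem_epi_iff_of_splitsAt {z : F} {r : ℝ}
    (h : ∀ᶠ z' in 𝓝 z, SplitsAt θ S zb vb z') :
    ∀ᶠ p in 𝓝 (z, r), p ∈ epi θ ↔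
      epiReduction S vb (p - (zb, 0)) ∈ {t : S × ℝ | θ (zb + t.1) ≤ t.2} :=
  ((continuous_fst.tendsto (z, r)).eventually h).mono fun p hp => hp.mem_epi_iff p.2

theorem hasFDerivAt_epiReduction_sub (S : Submodule ℝ F) [S.HasOrthogonalProjection] (vb : F)
    (p₀ p : F × ℝ) :
    HasFDerivAt (fun q => epiReduction S vb (q - p₀)) (epiReduction S vb) p :=
  (epiReduction S vb).hasFDerivAt.comp p ((hasFDerivAt_id p).sub_const p₀)

theorem epiReduction_affineProj (z : F) (r : ℝ) :
    epiReduction S vb ((affineProj S zb z, r - ⟪vb, z - affineProj S zb z⟫) - (zb, 0)) =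
      epiReduction S vb ((z, r) - (zb, 0)) := by
  have hidem : S.starProjection (S.starProjection (z - zb)) = S.starProjection (z - zb) :=
    S.starProjection_eq_self_iff.2 (S.starProjection_apply_mem _)
  simp only [Prod.mk_sub_mk, sub_zero, epiReduction_apply, affineProj, add_sub_cancel_left, hidem,
    sub_self, inner_zero_right, sub_add_eq_sub_sub]
  exact Prod.ext (Subtype.ext hidem) rfl

theorem sub_mem_of_innerPair_eq_comp_epiReduction {v : F} {g : StrongDual ℝ (S × ℝ)}
    (hg : innerPair v (-1 : ℝ) = g ∘L epiReduction S vb) : v - vb ∈ S := by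
  rw [← S.orthogonal_orthogonal]
  refine (Submodule.mem_orthogonal' _ _).2 fun s hs => ?_
  have hs0 : epiReduction S vb (s, ⟪vb, s⟫) = 0 := by
    rw [epiReduction_apply, Submodule.orthogonalProjectionOnto_eq_zero_iff.2 hs,
      S.starProjection_apply_eq_zero_iff.2 hs, sub_zero, sub_self, Prod.mk_zero_zero]
  have heq := congr($hg (s, ⟪vb, s⟫))
  rw [ContinuousLinearMap.comp_apply, hs0, map_zero, innerPair_apply] at heq
  rw [inner_sub_left]
  simpa [sub_eq_add_neg] using heq

end Splitting

section FirstOrder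

variable [FiniteDimensional ℝ F] {θ : F → EReal} {S : Submodule ℝ F} {zb vb : F}

theorem mem_limitingNormals_epi_iff_of_splitsAt {z : F} {r : ℝ}
    (h : ∀ᶠ z' in 𝓝 z, SplitsAt θ S zb vb z') {f : StrongDual ℝ (F × ℝ)} :
    f ∈ limitingNormals (epi θ) (z, r) ↔
      ∃ g ∈ limitingNormals {t : S × ℝ | θ (zb + t.1) ≤ t.2}
        (epiReduction S vb ((z, r) - (zb, 0))), f = g ∘L epiReduction S vb := by
  refine mem_limitingNormals_preimage_iff (Φ := fun p => epiReduction S vb (p - (zb, 0)))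
    (by fun_prop) (hasFDerivAt_epiReduction_sub ..) ?_ (eventually_mem_epi_iff_of_splitsAt h)
  refine LinearMap.range_eq_top.2 fun t => ⟨(t.1, t.2), ?_⟩
  simp [epiReduction_apply]

theorem mem_subdiff_iff_affineProj (hθ : Convex ℝ (epi θ)) (hbot : ∀ z, θ z ≠ ⊥)
    (htop : θ zb ≠ ⊤) {z v : F} (hz : ∀ᶠ z' in 𝓝 z, SplitsAt θ S zb vb z')
    (hπz : ∀ᶠ z' in 𝓝 (affineProj S zb z), SplitsAt θ S zb vb z') :
    v ∈ subdiff θ z ↔ v - vb ∈ S ∧ v ∈ subdiff θ (affineProj S zb z) := by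
  have hsplit := hz.self_of_nhds
  obtain hr | hr := eq_or_ne (θ (affineProj S zb z)) ⊤
  · rw [SplitsAt, hr, EReal.top_add_coe] at hsplit
    exact iff_of_false (fun h => ne_top_of_mem_subdiff htop h hsplit)
      fun h => ne_top_of_mem_subdiff htop h.2 hr
  · obtain ⟨s, hs⟩ := EReal.canLift.prf _ ⟨hr, hbot _⟩
    rw [SplitsAt, ← hs, ← EReal.coe_add] at hsplit
    rw [← innerPair_neg_one_mem_limitingNormals_epi_iff hθ hsplit,
      ← innerPair_neg_one_mem_limitingNormals_epi_iff hθ hs.symm,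
      mem_limitingNormals_epi_iff_of_splitsAt hz, mem_limitingNormals_epi_iff_of_splitsAt hπz,
      ← epiReduction_affineProj, add_sub_cancel_right, iff_and_self]
    rintro ⟨g, -, hg⟩
    exact sub_mem_of_innerPair_eq_comp_epiReduction hg

/-- First-order chain rule: `∂(θ ∘ φ)(x) = φ'(x)* ∂θ(φ x)` under the second-order qualification
condition. -/
theorem innerPair_mem_limitingNormals_epi_comp_iff {E : Type*} [NormedAddCommGroup E]
    [InnerProductSpace ℝ E] [CompleteSpace E] (hθ : Convex ℝ (epi θ)) {φ : E → F}
    {φ' : E →L[ℝ] F} {x : E} (hφ : ContDiffAt ℝ 1 φ x) (hφ' : HasFDerivAt φ φ' x)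
    (hsurj : (S.orthogonalProjectionOnto ∘L φ').range = ⊤)
    (hsplit : ∀ᶠ z in 𝓝 (φ x), SplitsAt θ S zb vb z) {r : ℝ} (hr : θ (φ x) = r) {q : E} :
    innerPair q (-1 : ℝ) ∈ limitingNormals (epi (θ ∘ φ)) (x, r) ↔
      ∃ v ∈ subdiff θ (φ x), φ'.adjoint v = q := by
  have hderiv : HasFDerivAt (Prod.map φ id) (φ'.prodMap (ContinuousLinearMap.id ℝ ℝ)) (x, r) :=
    HasFDerivAt.prodMap (x, r) hφ' (hasFDerivAt_id r)
  have hsurj' : (epiReduction S vb ∘L φ'.prodMap (ContinuousLinearMap.id ℝ ℝ)).range = ⊤ := by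
    refine LinearMap.range_eq_top.2 fun t => ?_
    obtain ⟨e, he⟩ := LinearMap.range_eq_top.1 hsurj t.1
    refine ⟨(e, t.2 + ⟪vb, φ' e - S.starProjection (φ' e)⟫), ?_⟩
    exact Prod.ext he (add_sub_cancel_right _ _)
  have hreduce := mem_limitingNormals_preimage_iff_of_reduction (Γ := epi (θ ∘ φ))
    (f := innerPair q (-1)) (hφ.prodMap' contDiffAt_id) hderiv (by fun_prop)
    (hasFDerivAt_epiReduction_sub S vb (zb, 0) _) hsurj' (eventually_mem_epi_iff_of_splitsAt hsplit)
    (Eventually.of_forall fun p => Iff.rfl)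
  rw [hreduce]
  constructor
  · rintro ⟨g, hg, hq⟩
    obtain ⟨v, b, rfl⟩ := exists_eq_innerPair g
    rw [innerPair_comp_prodMap, innerPair_inj] at hq
    obtain ⟨rfl, rfl⟩ := hq
    exact ⟨v, (innerPair_neg_one_mem_limitingNormals_epi_iff hθ hr).1 hg, rfl⟩
  · rintro ⟨v, hv, rfl⟩
    exact ⟨_, (innerPair_neg_one_mem_limitingNormals_epi_iff hθ hr).2 hv,
      (innerPair_comp_prodMap _ _ _).symm⟩

end FirstOrder

section ImageRule

/-- The derivative at `(p, v)` of `(p, v) ↦ (p, B p v)`, where `B'` is the derivative of `B` at `p`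
and `Bp` its value. -/
def evalDeriv {X E F : Type*} [NormedAddCommGroup X] [NormedSpace ℝ X] [NormedAddCommGroup E]
    [NormedSpace ℝ E] [NormedAddCommGroup F] [NormedSpace ℝ F] (B' : X →L[ℝ] F →L[ℝ] E)
    (Bp : F →L[ℝ] E) (v : F) : X × F →L[ℝ] X × E :=
  (ContinuousLinearMap.fst ℝ X F).prod ((B'.flip v).coprod Bp)

variable {X E : Type*} [NormedAddCommGroup X] [NormedAddCommGroup E] [NormedSpace ℝ E]
  [FiniteDimensional ℝ F] {B : X → F →L[ℝ] E} {S : Submodule ℝ F} {R : E →L[ℝ] S} {pb : X}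
  {vb : F}

theorem eventually_forall_mem_eq_zero (hB : ContinuousAt B pb)
    (hinj : ∀ s ∈ S, B pb s = 0 → s = 0) : ∀ᶠ p in 𝓝 pb, ∀ s ∈ S, B p s = 0 → s = 0 := by
  have hcont : ContinuousAt (fun p => B p ∘L S.subtypeL) pb := by fun_prop
  have hinj' : Function.Injective (B pb ∘L S.subtypeL) :=
    (injective_iff_map_eq_zero _).2 fun s hs => Subtype.ext (hinj s s.2 hs)
  filter_upwards [hcont.eventually_mem (ContinuousLinearMap.isOpen_injective.mem_nhds hinj')]
    with p hp s hs hBs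
  exact congr(($((injective_iff_map_eq_zero _).1 hp ⟨s, hs⟩ hBs) : F))

/-- A chart that straightens the graph of `(p, v) ↦ (p, B p v)` over `{v | v - vb ∈ S}`: it maps
`((p, v), κ)` to `(p, B p v + κ)`, recording that `v - vb ∈ S` and `R κ = 0` by two more components
that vanish. -/
def imageChart (B : X → F →L[ℝ] E) (S : Submodule ℝ F) (R : E →L[ℝ] S) (vb : F)
    (t : (X × F) × E) : (X × E) × (Sᗮ × S) :=
  ((t.1.1, B t.1.1 t.1.2 + t.2), (Sᗮ.orthogonalProjectionOnto (t.1.2 - vb), R t.2))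

theorem eventually_mem_prod_zero_iff_imageChart_mem (hB : ContinuousAt B pb)
    (hR : ∀ s : S, R (B pb s) = s) {Γ₀ : Set (X × F)} {Γ : Set (X × E)}
    (hΓ₀ : ∀ᶠ p in 𝓝 pb, ∀ v, (p, v) ∈ Γ₀ → v - vb ∈ S)
    (hΓ : ∀ᶠ p in 𝓝 pb, ∀ q, (p, q) ∈ Γ ↔ ∃ v, (p, v) ∈ Γ₀ ∧ B p v = q) :
    ∀ᶠ t in 𝓝 ((pb, vb), (0 : E)),
      t ∈ Γ₀ ×ˢ {0} ↔ imageChart B S R vb t ∈ Γ ×ˢ {0} := by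
  have hfst : Tendsto (fun t : (X × F) × E => t.1.1) (𝓝 ((pb, vb), 0)) (𝓝 pb) :=
    (continuous_fst.comp continuous_fst).tendsto _
  have hRB : ∀ᶠ p in 𝓝 pb, ∀ s ∈ S, R (B p s) = 0 → s = 0 :=
    eventually_forall_mem_eq_zero (B := fun p => R ∘L B p) (by fun_prop) fun s hs hs0 =>
      (Submodule.mk_eq_zero S hs).1 ((hR ⟨s, hs⟩).symm.trans hs0)
  filter_upwards [hfst.eventually hRB, hfst.eventually hΓ₀, hfst.eventually hΓ]
  rintro ⟨⟨p, v⟩, κ⟩ hinj hp₀ hp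
  simp only [imageChart, mem_prod, mem_singleton_iff, hp, Prod.mk_eq_zero,
    Submodule.orthogonalProjectionOnto_eq_zero_iff, S.orthogonal_orthogonal]
  constructor
  · rintro ⟨hv, rfl⟩
    exact ⟨⟨v, hv, (add_zero _).symm⟩, hp₀ v hv, map_zero R⟩
  · rintro ⟨⟨v', hv', heq⟩, hvS, hκ⟩
    have hdiff : v' - v = 0 := by
      refine hinj _ ?_ ?_
      · simpa only [sub_sub_sub_cancel_right] using S.sub_mem (hp₀ v' hv') hvS
      · rwa [map_sub, heq, add_sub_cancel_left]
    rw [sub_eq_zero.1 hdiff] at hv' heq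
    exact ⟨hv', left_eq_add.1 heq⟩

variable [NormedSpace ℝ X] {B' : X →L[ℝ] F →L[ℝ] E}

/-- The derivative of `imageChart` at `((pb, vb), κ)`. -/
def imageChartDeriv (B' : X →L[ℝ] F →L[ℝ] E) (Bp : F →L[ℝ] E) (S : Submodule ℝ F) (R : E →L[ℝ] S)
    (vb : F) : (X × F) × E →L[ℝ] (X × E) × (Sᗮ × S) :=
  ((evalDeriv B' Bp vb).coprod (ContinuousLinearMap.inr ℝ X E)).prod
    ((Sᗮ.orthogonalProjectionOnto ∘L ContinuousLinearMap.snd ℝ X F).prodMap R)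

theorem imageChartDeriv_apply (Bp : F →L[ℝ] E) (h : X) (k : F) (κ : E) :
    imageChartDeriv B' Bp S R vb ((h, k), κ) =
      ((h, B' h vb + Bp k + κ), (Sᗮ.orthogonalProjectionOnto k, R κ)) := by
  simp [imageChartDeriv, evalDeriv]

theorem hasFDerivAt_imageChart (hB : HasFDerivAt B B' pb) :
    HasFDerivAt (imageChart B S R vb) (imageChartDeriv B' (B pb) S R vb) ((pb, vb), 0) := by
  have hfst : HasFDerivAt Prod.fst (ContinuousLinearMap.fst ℝ (X × F) E) ((pb, vb), 0) :=
    hasFDerivAt_fst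
  have hBp := HasFDerivAt.comp (f := fun t : (X × F) × E => t.1.1) ((pb, vb), 0) hB hfst.fst
  have hproj := Sᗮ.orthogonalProjectionOnto.hasFDerivAt.comp ((pb, vb), (0 : E))
    (hfst.snd.sub_const vb)
  have hchart := (hfst.fst.prodMk ((hBp.clm_apply hfst.snd).add hasFDerivAt_snd)).prodMk
    (hproj.prodMk (R.hasFDerivAt.comp ((pb, vb), (0 : E)) hasFDerivAt_snd))
  refine hchart.congr_fderiv (ContinuousLinearMap.ext fun t => ?_)
  rw [imageChartDeriv_apply]
  simp [add_comm (B pb _)]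

theorem imageChartDeriv_range (hR : ∀ s : S, R (B pb s) = s) :
    (imageChartDeriv B' (B pb) S R vb).range = ⊤ := by
  refine LinearMap.range_eq_top.2 fun ⟨⟨h, q⟩, ⟨c, s⟩⟩ => ?_
  obtain ⟨κ₀, hκ₀⟩ : ∃ κ₀, κ₀ = q - B' h vb - B pb c := ⟨_, rfl⟩
  refine ⟨((h, c + (R κ₀ - s : S)), κ₀ - B pb (R κ₀ - s : S)), ?_⟩
  have hproj : Sᗮ.orthogonalProjectionOnto ((c : F) + (R κ₀ - s : S)) = c := by
    rw [map_add, Submodule.orthogonalProjectionOnto_mem_subspace_eq_self,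
      Submodule.orthogonalProjectionOnto_eq_zero_iff.2
        (S.le_orthogonal_orthogonal (R κ₀ - s).2), add_zero]
  refine (imageChartDeriv_apply ..).trans ?_
  rw [hproj, map_sub R, hR, sub_sub_cancel, map_add, hκ₀]
  congr 2
  abel

theorem mem_limitingNormals_singleton {K : Type*} [NormedAddCommGroup K] [NormedSpace ℝ K] (y : K)
    (g : StrongDual ℝ K) : g ∈ limitingNormals {y} y := by
  simp [mem_limitingNormals_iff_of_convex (convex_singleton y) (mem_singleton y)]

theorem mem_limitingNormals_prod_singleton_iff {K L : Type*} [NormedAddCommGroup K]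
    [NormedSpace ℝ K] [NormedAddCommGroup L] [NormedSpace ℝ L] {Ω : Set K} {x : K} {y : L}
    {f : StrongDual ℝ (K × L)} :
    f ∈ limitingNormals (Ω ×ˢ {y}) (x, y) ↔
      f ∘L ContinuousLinearMap.inl ℝ K L ∈ limitingNormals Ω x := by
  rw [mem_limitingNormals_prod_iff, and_iff_left (mem_limitingNormals_singleton y _)]

/-- `Γ` is the image of `Γ₀` under `(p, v) ↦ (p, B p v)`, which need not be a submersion; in the
chart `imageChart` it becomes `Γ₀ × {0}`. -/
theorem mem_limitingNormals_image_iff [FiniteDimensional ℝ X] [FiniteDimensional ℝ E]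
    (hB : ContDiffAt ℝ 1 B pb) (hB' : HasFDerivAt B B' pb)
    (hinj : ∀ s ∈ S, B pb s = 0 → s = 0) {Γ₀ : Set (X × F)} {Γ : Set (X × E)}
    (hΓ₀ : ∀ᶠ p in 𝓝 pb, ∀ v, (p, v) ∈ Γ₀ → v - vb ∈ S)
    (hΓ : ∀ᶠ p in 𝓝 pb, ∀ q, (p, q) ∈ Γ ↔ ∃ v, (p, v) ∈ Γ₀ ∧ B p v = q)
    {f : StrongDual ℝ (X × E)} :
    f ∈ limitingNormals Γ (pb, B pb vb) ↔
      f ∘L evalDeriv B' (B pb) vb ∈ limitingNormals Γ₀ (pb, vb) := by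
  obtain ⟨R, hR⟩ := ContinuousLinearMap.HasLeftInverse.of_injective_of_finiteDimensional
    (f := B pb ∘L S.subtypeL)
    ((injective_iff_map_eq_zero _).2 fun s hs => Subtype.ext (hinj s s.2 hs))
  have hchart : ContDiffAt ℝ 1 (imageChart B S R vb) ((pb, vb), 0) := by
    have : ContDiffAt ℝ 1 (fun t : (X × F) × E => B t.1.1) ((pb, vb), 0) :=
      hB.comp (f := fun t : (X × F) × E => t.1.1) ((pb, vb), 0) (by fun_prop)
    unfold imageChart
    fun_prop
  have hbase : imageChart B S R vb ((pb, vb), 0) = ((pb, B pb vb), 0) := by simp [imageChart]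
  have hiff := eventually_mem_prod_zero_iff_imageChart_mem hB.continuousAt hR hΓ₀ hΓ
  have hpull := comp_mem_limitingNormals_preimage_iff hchart (hasFDerivAt_imageChart hB')
    (imageChartDeriv_range hR) hiff
    (g := f ∘L ContinuousLinearMap.fst ℝ (X × E) (Sᗮ × S))
  rw [hbase, mem_limitingNormals_prod_singleton_iff,
    mem_limitingNormals_prod_singleton_iff] at hpull
  refine hpull.symm.trans (iff_of_eq congr($(?_) ∈ _))
  exact ContinuousLinearMap.ext fun q => congrArg f (add_zero (evalDeriv B' (B pb) vb q))

end ImageRule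

section Adjoint

/-- `ContinuousLinearMap.adjoint` as a linear map: over `ℝ` it is not merely conjugate-linear. -/
def adjointL (E F : Type*) [NormedAddCommGroup E] [InnerProductSpace ℝ E] [CompleteSpace E]
    [NormedAddCommGroup F] [InnerProductSpace ℝ F] [CompleteSpace F] :
    (E →L[ℝ] F) →L[ℝ] F →L[ℝ] E where
  toFun := ContinuousLinearMap.adjoint
  map_add' := map_add _
  map_smul' c A := by simp
  cont := ContinuousLinearMap.adjoint.continuous

theorem orthogonalProjectionOnto_comp_range_eq_top_iff {E : Type*} [NormedAddCommGroup E]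
    [InnerProductSpace ℝ E] [CompleteSpace E] [FiniteDimensional ℝ F] {S : Submodule ℝ F}
    {A : E →L[ℝ] F} :
    (S.orthogonalProjectionOnto ∘L A).range = ⊤ ↔ ∀ s ∈ S, A.adjoint s = 0 → s = 0 := by
  rw [← Submodule.orthogonal_eq_bot_iff, ContinuousLinearMap.orthogonal_range,
    ContinuousLinearMap.adjoint_comp, Submodule.adjoint_orthogonalProjectionOnto,
    LinearMap.ker_eq_bot']
  exact Subtype.forall.trans (forall₂_congr fun s hs => by simp)

variable {X E : Type*} [NormedAddCommGroup X] [NormedSpace ℝ X] [NormedAddCommGroup E]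
  [InnerProductSpace ℝ E] [CompleteSpace E] [CompleteSpace F] {A : E →L[ℝ] F}
  {A' : X →L[ℝ] E →L[ℝ] F}

theorem coprod_comp_evalDeriv_adjoint_apply (ℓ : StrongDual ℝ X) (u : E) (v : F) (h : X) (k : F) :
    (ℓ.coprod (innerSL ℝ (-u)) ∘L evalDeriv (adjointL E F ∘L A') A.adjoint v) (h, k) =
      ℓ h - ⟪v, A' h u⟫ - ⟪A u, k⟫ := by
  trans ℓ h + ⟪-u, (A' h).adjoint v + A.adjoint k⟫
  · rfl
  · rw [inner_neg_left, inner_add_right, ContinuousLinearMap.adjoint_inner_right,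
      ContinuousLinearMap.adjoint_inner_right, real_inner_comm v]
    ring

theorem coprod_comp_evalDeriv_adjoint_eq_iff {Φ' : X →L[ℝ] F} {ℓ : StrongDual ℝ X}
    {u : E} {v y b : F} :
    ℓ.coprod (innerSL ℝ (-u)) ∘L evalDeriv (adjointL E F ∘L A') A.adjoint v =
        innerPair y b ∘L Φ'.prodMap (ContinuousLinearMap.id ℝ F) ↔
      b = -(A u) ∧ ∀ h, ℓ h = ⟪v, A' h u⟫ + ⟪y, Φ' h⟫ := by
  have hpoint : ℓ.coprod (innerSL ℝ (-u)) ∘L evalDeriv (adjointL E F ∘L A') A.adjoint v =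
        innerPair y b ∘L Φ'.prodMap (ContinuousLinearMap.id ℝ F) ↔
      ∀ h k, ℓ h - ⟪v, A' h u⟫ - ⟪A u, k⟫ = ⟪y, Φ' h⟫ + ⟪b, k⟫ := by
    simp only [ContinuousLinearMap.ext_iff, Prod.forall, coprod_comp_evalDeriv_adjoint_apply]
    rfl
  rw [hpoint]
  constructor
  · intro heq
    refine ⟨ext_inner_right ℝ fun k => by simpa [eq_comm] using heq 0 k, fun h => ?_⟩
    have hh := heq h 0
    rw [inner_zero_right, inner_zero_right] at hh
    linarith
  · rintro ⟨rfl, hℓ⟩ h k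
    rw [hℓ, inner_neg_left]
    ring

end Adjoint

section SecondOrder

variable {X E : Type*} [NormedAddCommGroup X] [NormedSpace ℝ X] [FiniteDimensional ℝ X]
  [FiniteDimensional ℝ F] {S : Submodule ℝ F} {pb : X} {vb : F} {Φ : X → F} {Φ' : X →L[ℝ] F}
  {Ω : Set (F × F)}

theorem mem_limitingNormals_preimage_prodMap_iff (hΦ : ContDiffAt ℝ 1 Φ pb)
    (hΦ' : HasFDerivAt Φ Φ' pb) (hsurj : (S.orthogonalProjectionOnto ∘L Φ').range = ⊤)
    (hΩ : ∀ᶠ z in 𝓝 (Φ pb), ∀ v,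
      (z, v) ∈ Ω ↔ v - vb ∈ S ∧ (affineProj S (Φ pb) z, v) ∈ Ω)
    {f : StrongDual ℝ (X × F)} :
    f ∈ limitingNormals (Prod.map Φ id ⁻¹' Ω) (pb, vb) ↔
      ∃ g ∈ limitingNormals Ω (Φ pb, vb),
        f = g ∘L Φ'.prodMap (ContinuousLinearMap.id ℝ F) := by
  have hderiv : HasFDerivAt (Prod.map Φ id) (Φ'.prodMap (ContinuousLinearMap.id ℝ F)) (pb, vb) :=
    HasFDerivAt.prodMap (pb, vb) hΦ' (hasFDerivAt_id vb)
  let T : F × F →L[ℝ] S × F := S.orthogonalProjectionOnto.prodMap (ContinuousLinearMap.id ℝ F)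
  have hT : HasFDerivAt (fun q => T (q - (Φ pb, 0))) T (Φ pb, vb) :=
    T.hasFDerivAt.comp _ ((hasFDerivAt_id _).sub_const _)
  refine mem_limitingNormals_preimage_iff_of_reduction
    (C := {t : S × F | t.2 - vb ∈ S ∧ (Φ pb + t.1, t.2) ∈ Ω}) (hΦ.prodMap' contDiffAt_id) hderiv
    (by fun_prop) hT ?_ ?_ (Eventually.of_forall fun _ => Iff.rfl)
  · refine LinearMap.range_eq_top.2 fun t => ?_
    obtain ⟨h, hh⟩ := LinearMap.range_eq_top.1 hsurj t.1
    exact ⟨(h, t.2), Prod.ext hh rfl⟩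
  · filter_upwards [(continuous_fst.tendsto (Φ pb, vb)).eventually hΩ] with q hq
    refine (hq q.2).trans ?_
    simp [T, affineProj]

variable [NormedAddCommGroup E]

/-- Second-order chain rule in dual form: `Γ` is the graph of `p ↦ B p (Ω (Φ p))`. -/
theorem mem_limitingNormals_graph_comp_iff [NormedSpace ℝ E] [FiniteDimensional ℝ E]
    (hΦ : ContDiffAt ℝ 1 Φ pb) (hΦ' : HasFDerivAt Φ Φ' pb)
    (hsurj : (S.orthogonalProjectionOnto ∘L Φ').range = ⊤)
    {B : X → F →L[ℝ] E} {B' : X →L[ℝ] F →L[ℝ] E} (hB : ContDiffAt ℝ 1 B pb)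
    (hB' : HasFDerivAt B B' pb) (hinj : ∀ s ∈ S, B pb s = 0 → s = 0)
    (hΩ : ∀ᶠ z in 𝓝 (Φ pb), ∀ v,
      (z, v) ∈ Ω ↔ v - vb ∈ S ∧ (affineProj S (Φ pb) z, v) ∈ Ω)
    {Γ : Set (X × E)} (hΓ : ∀ᶠ p in 𝓝 pb, ∀ q, (p, q) ∈ Γ ↔ ∃ v, (Φ p, v) ∈ Ω ∧ B p v = q)
    {f : StrongDual ℝ (X × E)} :
    f ∈ limitingNormals Γ (pb, B pb vb) ↔ ∃ g ∈ limitingNormals Ω (Φ pb, vb),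
      f ∘L evalDeriv B' (B pb) vb = g ∘L Φ'.prodMap (ContinuousLinearMap.id ℝ F) := by
  have hmem : ∀ᶠ p in 𝓝 pb, ∀ v, (p, v) ∈ Prod.map Φ id ⁻¹' Ω → v - vb ∈ S :=
    (hΦ.continuousAt.eventually hΩ).mono fun p hp v hv => ((hp v).1 hv).1
  rw [mem_limitingNormals_image_iff hB hB' hinj hmem hΓ,
    mem_limitingNormals_preimage_prodMap_iff hΦ hΦ' hsurj hΩ]

variable [InnerProductSpace ℝ E] [FiniteDimensional ℝ E]

theorem coprod_mem_limitingNormals_graph_adjoint_comp_iff {A : X → E →L[ℝ] F}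
    {A' : X →L[ℝ] E →L[ℝ] F} (hΦ : ContDiffAt ℝ 1 Φ pb) (hΦ' : HasFDerivAt Φ Φ' pb)
    (hsurj : (S.orthogonalProjectionOnto ∘L Φ').range = ⊤)
    (hA : ContDiffAt ℝ 1 A pb) (hA' : HasFDerivAt A A' pb)
    (hinj : ∀ s ∈ S, (A pb).adjoint s = 0 → s = 0)
    (hΩ : ∀ᶠ z in 𝓝 (Φ pb), ∀ v,
      (z, v) ∈ Ω ↔ v - vb ∈ S ∧ (affineProj S (Φ pb) z, v) ∈ Ω)
    {Γ : Set (X × E)}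
    (hΓ : ∀ᶠ p in 𝓝 pb, ∀ q, (p, q) ∈ Γ ↔ ∃ v, (Φ p, v) ∈ Ω ∧ (A p).adjoint v = q)
    {ℓ : StrongDual ℝ X} {u : E} :
    ℓ.coprod (innerSL ℝ (-u)) ∈ limitingNormals Γ (pb, (A pb).adjoint vb) ↔
      ∃ y, innerPair y (-(A pb u)) ∈ limitingNormals Ω (Φ pb, vb) ∧
        ∀ h, ℓ h = ⟪vb, A' h u⟫ + ⟪y, Φ' h⟫ := by
  refine (mem_limitingNormals_graph_comp_iff hΦ hΦ' hsurj
    ((adjointL E F).contDiff.contDiffAt.comp pb hA) ((adjointL E F).hasFDerivAt.comp pb hA') hinj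
    hΩ hΓ).trans ⟨?_, ?_⟩
  · rintro ⟨g, hg, heq⟩
    obtain ⟨y, b, rfl⟩ := exists_eq_innerPair g
    obtain ⟨rfl, hℓ⟩ := coprod_comp_evalDeriv_adjoint_eq_iff.1 heq
    exact ⟨y, hg, hℓ⟩
  · rintro ⟨y, hy, hℓ⟩
    exact ⟨_, hy, coprod_comp_evalDeriv_adjoint_eq_iff.2 ⟨rfl, hℓ⟩⟩

end SecondOrder

section PartialHessians

variable {E H : Type*} [NormedAddCommGroup E] [InnerProductSpace ℝ E]
  [NormedAddCommGroup H] [NormedSpace ℝ H]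

theorem hasFDerivAt_partial_fst {Φ : E × H → F} {Φ' : E × H →L[ℝ] F} {p : E × H}
    (h : HasFDerivAt Φ Φ' p) :
    HasFDerivAt (fun x => Φ (x, p.2)) (Φ' ∘L ContinuousLinearMap.inl ℝ E H) p.1 :=
  HasFDerivAt.comp (g := Φ) p.1 h (hasFDerivAt_prodMk_left p.1 p.2)

theorem hasFDerivAt_partial_snd {Φ : E × H → F} {Φ' : E × H →L[ℝ] F} {p : E × H}
    (h : HasFDerivAt Φ Φ' p) :
    HasFDerivAt (fun w => Φ (p.1, w)) (Φ' ∘L ContinuousLinearMap.inr ℝ E H) p.2 :=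
  HasFDerivAt.comp (g := Φ) p.2 h (hasFDerivAt_prodMk_right p.1 p.2)

theorem hasFDerivAt_clm_fderiv {K : Type*} [NormedAddCommGroup K] [NormedSpace ℝ K]
    (L : (H →L[ℝ] F) →L[ℝ] K) {Φ : H → F} {p : H} (hΦ : ContDiffAt ℝ 2 Φ p) :
    HasFDerivAt (fun p => L (fderiv ℝ Φ p)) (L ∘L fderiv ℝ (fderiv ℝ Φ) p) p :=
  L.hasFDerivAt.comp p ((hΦ.fderiv_right (m := 1) le_rfl).differentiableAt one_ne_zero).hasFDerivAt

variable [CompleteSpace E] [CompleteSpace F]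

theorem hasGradientAt_inner_comp {f : E → F} {f' : E →L[ℝ] F} {x : E} (hf : HasFDerivAt f f' x)
    (v : F) : HasGradientAt (fun y => ⟪v, f y⟫) (f'.adjoint v) x :=
  ((innerSL ℝ v).hasFDerivAt.comp x hf).congr_fderiv <| ContinuousLinearMap.ext fun h =>
    (ContinuousLinearMap.adjoint_inner_left f' h v).symm

theorem exists_hasFDerivAt_gradient_inner_comp {Φ : E × H → F} {pb : E × H}
    (hΦ : ContDiffAt ℝ 2 Φ pb) (v : F) :
    ∃ T : E × H →L[ℝ] E,
      HasFDerivAt (fun p => gradient (fun x => ⟪v, Φ (x, p.2)⟫) p.1) T pb ∧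
      ∀ h u, ⟪T h, u⟫ = ⟪v, fderiv ℝ (fderiv ℝ Φ) pb h (u, 0)⟫ := by
  let gradAt : (E × H →L[ℝ] F) →L[ℝ] E :=
    ContinuousLinearMap.apply ℝ E v ∘L adjointL E F ∘L
      ContinuousLinearMap.precomp F (ContinuousLinearMap.inl ℝ E H)
  have hgradAt : ∀ (A : E × H →L[ℝ] F) u, ⟪gradAt A, u⟫ = ⟪v, A (u, 0)⟫ := fun A u =>
    ContinuousLinearMap.adjoint_inner_left (A ∘L ContinuousLinearMap.inl ℝ E H) u v
  refine ⟨gradAt ∘L fderiv ℝ (fderiv ℝ Φ) pb,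
    (hasFDerivAt_clm_fderiv gradAt hΦ).congr_of_eventuallyEq ?_, fun h u => hgradAt _ u⟩
  filter_upwards [hΦ.eventually (by simp)] with p hp
  have hfst := hasFDerivAt_partial_fst (hp.differentiableAt two_ne_zero).hasFDerivAt
  exact (hasGradientAt_inner_comp hfst v).gradient

end PartialHessians

section PartialHessiansEuc

variable {n d : ℕ} [CompleteSpace F] {Φ : Euc n × Euc d → F} {xb : Euc n} {wb : Euc d}

theorem inner_hessXX_inner_comp (hΦ : ContDiffAt ℝ 2 Φ (xb, wb)) (v : F) (h u : Euc n) :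
    ⟪hessXX (fun x w => ⟪v, Φ (x, w)⟫) xb wb h, u⟫ =
      ⟪v, fderiv ℝ (fderiv ℝ Φ) (xb, wb) (h, 0) (u, 0)⟫ := by
  obtain ⟨T, hT, hTu⟩ := exists_hasFDerivAt_gradient_inner_comp hΦ v
  rw [hessXX, (hasFDerivAt_partial_fst hT).fderiv]
  exact hTu (h, 0) u

theorem inner_hessWX_inner_comp (hΦ : ContDiffAt ℝ 2 Φ (xb, wb)) (v : F) (k : Euc d) (u : Euc n) :
    ⟪hessWX (fun x w => ⟪v, Φ (x, w)⟫) xb wb k, u⟫ =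
      ⟪v, fderiv ℝ (fderiv ℝ Φ) (xb, wb) (0, k) (u, 0)⟫ := by
  obtain ⟨T, hT, hTu⟩ := exists_hasFDerivAt_gradient_inner_comp hΦ v
  rw [hessWX, (hasFDerivAt_partial_snd hT).fderiv]
  exact hTu (0, k) u

end PartialHessiansEuc

section PartialSubdifferential

variable [FiniteDimensional ℝ F]

theorem mem_sosd_iff {θ : F → EReal} {z v u y : F} :
    y ∈ sosd θ z v u ↔
      innerPair y (-u) ∈ limitingNormals {q : F × F | q.2 ∈ subdiff θ q.1} (z, v) :=
  pl2_mem_limitingNormal_iff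

variable {n d : ℕ}

theorem mem_coderivPartialSubdiffX_iff {ψ : Euc n → Euc d → EReal} {xb qb u : Euc n} {wb : Euc d}
    {P : Euc n × Euc d} :
    P ∈ coderivPartialSubdiffX ψ xb wb qb u ↔
      (innerPair P.1 P.2).coprod (innerSL ℝ (-u)) ∈
        limitingNormals {q | q.2 ∈ partialSubdiffX ψ q.1.1 q.1.2} ((xb, wb), qb) :=
  let e := ((WithLp.prodContinuousLinearEquiv 2 ℝ (Euc n) (Euc d)).symm.prodCongr
    (ContinuousLinearEquiv.refl ℝ (Euc n))).trans
      (WithLp.prodContinuousLinearEquiv 2 ℝ (WithLp 2 (Euc n × Euc d)) (Euc n)).symm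
  have : FiniteDimensional ℝ (WithLp 2 (WithLp 2 (Euc n × Euc d) × Euc n)) :=
    e.toLinearEquiv.finiteDimensional
  mem_limitingNormal_apply_iff e (x := ((xb, wb), qb))

theorem mem_partialSubdiffX_comp_iff {θ : F → EReal} (hθ : Convex ℝ (epi θ))
    (hbot : ∀ z, θ z ≠ ⊥) {zb vb : F} (htop : θ zb ≠ ⊤) {S : Submodule ℝ F}
    {Φ : Euc n × Euc d → F} {p : Euc n × Euc d} (hΦ : ContDiffAt ℝ 1 Φ p)
    (hinj : ∀ s ∈ S, (fderiv ℝ Φ p ∘L ContinuousLinearMap.inl ℝ _ _).adjoint s = 0 → s = 0)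
    (hsplit : ∀ᶠ z in 𝓝 (Φ p), SplitsAt θ S zb vb z) {q : Euc n} :
    q ∈ partialSubdiffX (fun x w => θ (Φ (x, w))) p.1 p.2 ↔
      ∃ v ∈ subdiff θ (Φ p), (fderiv ℝ Φ p ∘L ContinuousLinearMap.inl ℝ _ _).adjoint v = q := by
  have hfst : ContDiffAt ℝ 1 (fun x => Φ (x, p.2)) p.1 :=
    ContDiffAt.comp (g := Φ) p.1 hΦ (by fun_prop)
  have hchain : ∀ r : ℝ, θ (Φ p) = r →
      (pl2 q (-1 : ℝ) ∈ limitingNormal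
          {t | θ (Φ ((WithLp.equiv 2 (Euc n × ℝ) t).1, p.2)) ≤ (WithLp.equiv 2 (Euc n × ℝ) t).2}
          (pl2 p.1 r) ↔
        ∃ v ∈ subdiff θ (Φ p), (fderiv ℝ Φ p ∘L ContinuousLinearMap.inl ℝ _ _).adjoint v = q) :=
    fun r hr => pl2_mem_limitingNormal_iff.trans <|
      innerPair_mem_limitingNormals_epi_comp_iff hθ hfst
        (hasFDerivAt_partial_fst (hΦ.differentiableAt one_ne_zero).hasFDerivAt)
        (orthogonalProjectionOnto_comp_range_eq_top_iff.2 hinj) hsplit hr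
  constructor
  · rintro ⟨r, hr, hq⟩
    exact (hchain r hr).1 hq
  · rintro ⟨v, hv, hq⟩
    obtain ⟨r, hr⟩ := EReal.canLift.prf _ ⟨ne_top_of_mem_subdiff htop hv, hbot _⟩
    exact ⟨r, hr.symm, (hchain r hr.symm).2 ⟨v, hv, hq⟩⟩

theorem eventually_mem_subdiff_iff_affineProj {θ : F → EReal} (hθ : Convex ℝ (epi θ))
    (hbot : ∀ z, θ z ≠ ⊥) {zb vb : F} (htop : θ zb ≠ ⊤) {S : Submodule ℝ F}
    (hsplit : ∀ᶠ z in 𝓝 zb, SplitsAt θ S zb vb z) :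
    ∀ᶠ z in 𝓝 zb, ∀ v,
      v ∈ subdiff θ z ↔ v - vb ∈ S ∧ v ∈ subdiff θ (affineProj S zb z) := by
  filter_upwards [hsplit.eventually_nhds,
    (tendsto_affineProj S zb).eventually hsplit.eventually_nhds] with z hz hπz v
  exact mem_subdiff_iff_affineProj hθ hbot htop hz hπz

theorem eventually_mem_partialSubdiffX_comp_iff {θ : F → EReal} (hθ : Convex ℝ (epi θ))
    (hbot : ∀ z, θ z ≠ ⊥) {S : Submodule ℝ F} {vb : F} {Φ : Euc n × Euc d → F}
    {pb : Euc n × Euc d} (htop : θ (Φ pb) ≠ ⊤) (hΦ : ContDiffAt ℝ 1 Φ pb)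
    (hinj : ∀ s ∈ S, (fderiv ℝ Φ pb ∘L ContinuousLinearMap.inl ℝ _ _).adjoint s = 0 → s = 0)
    (hsplit : ∀ᶠ z in 𝓝 (Φ pb), SplitsAt θ S (Φ pb) vb z) :
    ∀ᶠ p in 𝓝 pb, ∀ q, q ∈ partialSubdiffX (fun x w => θ (Φ (x, w))) p.1 p.2 ↔
      ∃ v ∈ subdiff θ (Φ p), (fderiv ℝ Φ p ∘L ContinuousLinearMap.inl ℝ _ _).adjoint v = q := by
  have hadj : ContinuousAt
      (fun p => (fderiv ℝ Φ p ∘L ContinuousLinearMap.inl ℝ (Euc n) (Euc d)).adjoint) pb :=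
    ContinuousLinearMap.adjoint.continuous.continuousAt.comp
      ((hΦ.continuousAt_fderiv one_ne_zero).clm_comp continuousAt_const)
  filter_upwards [hΦ.eventually (by simp), eventually_forall_mem_eq_zero hadj hinj,
    hΦ.continuousAt.eventually hsplit.eventually_nhds] with p hΦp hinjp hsplitp q
  exact mem_partialSubdiffX_comp_iff hθ hbot htop hΦp hinjp hsplitp

theorem forall_innerPair_eq_iff {Φ : Euc n × Euc d → F} {xb : Euc n} {wb : Euc d}
    (hΦ : ContDiffAt ℝ 2 Φ (xb, wb)) {v y : F} {u : Euc n} {P : Euc n × Euc d} :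
    (∀ h, innerPair P.1 P.2 h =
        ⟪v, fderiv ℝ (fderiv ℝ Φ) (xb, wb) h (u, 0)⟫ + ⟪y, fderiv ℝ Φ (xb, wb) h⟫) ↔
      P = (hessXX (fun x w => ⟪v, Φ (x, w)⟫) xb wb u +
             (fderiv ℝ Φ (xb, wb) ∘L ContinuousLinearMap.inl ℝ _ _).adjoint y,
           (hessWX (fun x w => ⟪v, Φ (x, w)⟫) xb wb).adjoint u +
             (fderiv ℝ Φ (xb, wb) ∘L ContinuousLinearMap.inr ℝ _ _).adjoint y) := by
  have hsymm : IsSymmSndFDerivAt ℝ Φ (xb, wb) := hΦ.isSymmSndFDerivAt (by simp)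
  have hXX : ∀ h, ⟪hessXX (fun x w => ⟪v, Φ (x, w)⟫) xb wb u +
      (fderiv ℝ Φ (xb, wb) ∘L ContinuousLinearMap.inl ℝ _ _).adjoint y, h⟫ =
        ⟪v, fderiv ℝ (fderiv ℝ Φ) (xb, wb) (h, 0) (u, 0)⟫ + ⟪y, fderiv ℝ Φ (xb, wb) (h, 0)⟫ :=
    fun h => by
      rw [inner_add_left, inner_hessXX_inner_comp hΦ, ContinuousLinearMap.adjoint_inner_left,
        hsymm (u, 0)]
      rfl
  have hWX : ∀ k, ⟪(hessWX (fun x w => ⟪v, Φ (x, w)⟫) xb wb).adjoint u +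
      (fderiv ℝ Φ (xb, wb) ∘L ContinuousLinearMap.inr ℝ _ _).adjoint y, k⟫ =
        ⟪v, fderiv ℝ (fderiv ℝ Φ) (xb, wb) (0, k) (u, 0)⟫ + ⟪y, fderiv ℝ Φ (xb, wb) (0, k)⟫ :=
    fun k => by
      rw [inner_add_left, ContinuousLinearMap.adjoint_inner_left, real_inner_comm,
        inner_hessWX_inner_comp hΦ, ContinuousLinearMap.adjoint_inner_left]
      rfl
  rw [← Prod.mk.eta (p := P), Prod.mk.injEq]
  refine ⟨fun hP => ⟨ext_inner_right ℝ fun h => ?_, ext_inner_right ℝ fun k => ?_⟩, ?_⟩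
  · rw [hXX, ← hP]
    simp [innerPair]
  · rw [hWX, ← hP]
    simp [innerPair]
  · rintro ⟨h₁, h₂⟩ ⟨h, k⟩
    trans ⟪P.1, h⟫ + ⟪P.2, k⟫
    · rfl
    · have hsum : ((h, k) : Euc n × Euc d) = (h, 0) + (0, k) := by simp
      rw [h₁, h₂, hXX, hWX, hsum]
      simp only [map_add, add_apply, inner_add_right]
      ring

end PartialSubdifferential

section PiecewiseLinear

theorem sub_mem_Spar {θ : F → EReal} {z v w : F} (hv : v ∈ subdiff θ z) (hw : w ∈ subdiff θ z) :
    v - w ∈ Spar θ z :=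
  AffineSubspace.vsub_mem_direction (subset_affineSpan ℝ _ hv) (subset_affineSpan ℝ _ hw)

variable {m l p : ℕ} {a : Fin l → Euc m} {α : Fin l → ℝ} {d : Fin p → Euc m} {β : Fin p → ℝ}
  {z zb vb : Euc m}

theorem cpwlFun_ne_bot : cpwlFun a α d β z ≠ ⊥ := by
  unfold cpwlFun
  split_ifs <;> simp

theorem cpwlFun_ne_top (hz : z ∈ cpwlDom d β) : cpwlFun a α d β z ≠ ⊤ := by
  simp [cpwlFun, hz]

theorem coe_le_cpwlFun (i : Fin l) : ((⟪a i, z⟫ - α i : ℝ) : EReal) ≤ cpwlFun a α d β z := by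
  unfold cpwlFun
  split_ifs
  · have hbdd := (finite_range fun i => ⟪a i, z⟫ - α i).bddAbove
    exact EReal.coe_le_coe_iff.2 (le_ciSup hbdd i)
  · exact le_top

theorem mem_subdiff_cpwlFun_of_mem_Kact {i : Fin l} (hi : i ∈ Kact a α d β z) :
    a i ∈ subdiff (cpwlFun a α d β) z := fun z' => by
  rw [show cpwlFun a α d β z = _ from hi, ← EReal.coe_add, inner_sub_right]
  convert coe_le_cpwlFun i using 2
  ring

theorem add_mem_subdiff_cpwlFun_of_mem_Iact {k : Fin p} (hk : k ∈ Iact d β z)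
    (hv : vb ∈ subdiff (cpwlFun a α d β) z) :
    vb + d k ∈ subdiff (cpwlFun a α d β) z := fun z' => by
  by_cases hz' : z' ∈ cpwlDom d β
  · refine le_trans (add_le_add_right (EReal.coe_le_coe_iff.2 ?_) _) (hv z')
    have hle : ⟪d k, z'⟫ ≤ β k := hz' k
    have heq : ⟪d k, z⟫ = β k := hk
    rw [inner_add_left, inner_sub_right (d k)]
    linarith
  · simp [cpwlFun, hz']

variable [Nonempty (Fin l)]

theorem cpwlFun_le_coe_iff {r : ℝ} :
    cpwlFun a α d β z ≤ r ↔ (∀ k, ⟪d k, z⟫ ≤ β k) ∧ ∀ i, ⟪a i, z⟫ - α i ≤ r := by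
  by_cases hz : z ∈ cpwlDom d β
  · rw [cpwlFun, if_pos hz, EReal.coe_le_coe_iff, ciSup_le_iff (finite_range _).bddAbove]
    exact (and_iff_right hz).symm
  · rw [cpwlFun, if_neg hz]
    exact iff_of_false (by simp) fun h => hz h.1

theorem nonempty_Kact (hz : z ∈ cpwlDom d β) : (Kact a α d β z).Nonempty := by
  obtain ⟨i, hi⟩ := exists_eq_ciSup_of_finite (f := fun i => ⟪a i, z⟫ - α i)
  exact ⟨i, by rw [Kact, mem_ofPred_eq, cpwlFun, if_pos hz, hi]⟩

theorem convex_epi_cpwlFun : Convex ℝ (epi (cpwlFun a α d β)) := by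
  have hepi : epi (cpwlFun a α d β) =
      (⋂ k, {q : Euc m × ℝ | ⟪d k, q.1⟫ ≤ β k}) ∩ ⋂ i, {q | ⟪a i, q.1⟫ - q.2 ≤ α i} := by
    ext q
    simp only [epi, mem_ofPred_eq, cpwlFun_le_coe_iff, mem_inter_iff, mem_iInter, sub_le_comm]
  rw [hepi]
  refine (convex_iInter fun k => ?_).inter (convex_iInter fun i => ?_)
  · exact convex_halfSpace_le (innerSL ℝ (d k) ∘L ContinuousLinearMap.fst ℝ _ _).isLinear _
  · exact convex_halfSpace_le
      (innerSL ℝ (a i) ∘L ContinuousLinearMap.fst ℝ _ _ - ContinuousLinearMap.snd ℝ _ _).isLinear _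

theorem eventually_cpwlFun_le_coe_iff (hzb : zb ∈ cpwlDom d β) :
    ∀ᶠ z in 𝓝 zb, ∀ r : ℝ, cpwlFun a α d β z ≤ r ↔
      (∀ k ∈ Iact d β zb, ⟪d k, z⟫ ≤ β k) ∧ ∀ i ∈ Kact a α d β zb, ⟪a i, z⟫ - α i ≤ r := by
  obtain ⟨j, hj⟩ := nonempty_Kact (a := a) (α := α) hzb
  have hdom : ∀ᶠ z in 𝓝 zb, ∀ k ∉ Iact d β zb, ⟪d k, z⟫ ≤ β k := by
    refine eventually_all.2 fun k => eventually_imp_distrib_left.2 fun hk => ?_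
    exact ((by fun_prop : Continuous fun z => ⟪d k, z⟫).tendsto zb).eventually_le_const
      ((hzb k).lt_of_ne hk)
  have hmax : ∀ᶠ z in 𝓝 zb, ∀ i ∉ Kact a α d β zb, ⟪a i, z⟫ - α i ≤ ⟪a j, z⟫ - α j := by
    refine eventually_all.2 fun i => eventually_imp_distrib_left.2 fun hi => ?_
    have hlt : ⟪a i, zb⟫ - α i < ⟪a j, zb⟫ - α j := by
      rw [← EReal.coe_lt_coe_iff, ← show cpwlFun a α d β zb = _ from hj]
      exact (coe_le_cpwlFun i).lt_of_ne' hi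
    have hcont : ∀ i, Continuous fun z => ⟪a i, z⟫ - α i := fun i => by fun_prop
    exact (((hcont i).tendsto zb).eventually_lt ((hcont j).tendsto zb) hlt).mono fun _ => le_of_lt
  filter_upwards [hdom, hmax] with z hz hz' r
  rw [cpwlFun_le_coe_iff]
  constructor
  · exact fun h => ⟨fun k _ => h.1 k, fun i _ => h.2 i⟩
  · refine fun h => ⟨fun k => ?_, fun i => ?_⟩
    · exact (em (k ∈ Iact d β zb)).elim (h.1 k) (hz k)
    · exact (em (i ∈ Kact a α d β zb)).elim (h.2 i) fun hi => (hz' i hi).trans (h.2 j hj)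

theorem eventually_splitsAt_cpwlFun (hzb : zb ∈ cpwlDom d β)
    (hvb : vb ∈ subdiff (cpwlFun a α d β) zb) :
    ∀ᶠ z in 𝓝 zb, SplitsAt (cpwlFun a α d β) (Spar (cpwlFun a α d β) zb) zb vb z := by
  have hlocal := eventually_cpwlFun_le_coe_iff (a := a) (α := α) hzb
  filter_upwards [hlocal, (tendsto_affineProj (Spar (cpwlFun a α d β) zb) zb).eventually hlocal]
    with z hz hπz
  refine splitsAt_of_forall_le_coe_iff fun r => ?_
  rw [hz, hπz]
  refine and_congr (forall₂_congr fun k hk => ?_) (forall₂_congr fun i hi => ?_)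
  · have hd : d k ∈ Spar (cpwlFun a α d β) zb := by
      simpa using sub_mem_Spar (add_mem_subdiff_cpwlFun_of_mem_Iact hk hvb) hvb
    rw [inner_affineProj_of_mem hd]
  · have ha := inner_affineProj_of_mem
      (sub_mem_Spar (mem_subdiff_cpwlFun_of_mem_Kact hi) hvb) zb z
    rw [inner_sub_left, inner_sub_left] at ha
    rw [inner_sub_right]
    constructor <;> intro <;> linarith

end PiecewiseLinear

section MainTheorem

variable [FiniteDimensional ℝ F] {n d : ℕ}

theorem second_order_chain_rule_cpwl_general {θ : F → EReal} (hθ : Convex ℝ (epi θ))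
    (hbot : ∀ z, θ z ≠ ⊥) {S : Submodule ℝ F} {vb : F} {Φ : Euc n × Euc d → F} {xb : Euc n}
    {wb : Euc d} (hΦ : ContDiffAt ℝ 2 Φ (xb, wb)) (htop : θ (Φ (xb, wb)) ≠ ⊤)
    (hsplit : ∀ᶠ z in 𝓝 (Φ (xb, wb)), SplitsAt θ S (Φ (xb, wb)) vb z)
    (hsoqc : (S : Set F) ∩
        {y | ContinuousLinearMap.adjoint (fderiv ℝ (fun x => Φ (x, wb)) xb) y = 0} = {0})
    {qb : Euc n}
    (hvb : ContinuousLinearMap.adjoint (fderiv ℝ (fun x => Φ (x, wb)) xb) vb = qb) (u : Euc n) :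
    coderivPartialSubdiffX (fun x w => θ (Φ (x, w))) xb wb qb u =
      {P | ∃ y ∈ sosd θ (Φ (xb, wb)) vb (fderiv ℝ (fun x => Φ (x, wb)) xb u),
        P = (hessXX (fun x w => ⟪vb, Φ (x, w)⟫) xb wb u +
               ContinuousLinearMap.adjoint (fderiv ℝ (fun x => Φ (x, wb)) xb) y,
             ContinuousLinearMap.adjoint (hessWX (fun x w => ⟪vb, Φ (x, w)⟫) xb wb) u +
               ContinuousLinearMap.adjoint (fderiv ℝ (fun w => Φ (xb, w)) wb) y)} := by
  have hΦ' := (hΦ.differentiableAt two_ne_zero).hasFDerivAt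
  have hΦ₁ : ContDiffAt ℝ 1 Φ (xb, wb) := hΦ.of_le one_le_two
  rw [(hasFDerivAt_partial_fst hΦ').fderiv] at hsoqc hvb ⊢
  rw [(hasFDerivAt_partial_snd hΦ').fderiv]
  subst hvb
  have hinj : ∀ s ∈ S, (fderiv ℝ Φ (xb, wb) ∘L ContinuousLinearMap.inl ℝ _ _).adjoint s = 0 →
      s = 0 := fun s hs hs0 => hsoqc.subset ⟨hs, hs0⟩
  have hsurj : (S.orthogonalProjectionOnto ∘L fderiv ℝ Φ (xb, wb)).range = ⊤ :=
    top_le_iff.1 <| (orthogonalProjectionOnto_comp_range_eq_top_iff.2 hinj).ge.trans <|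
      LinearMap.range_comp_le_range (ContinuousLinearMap.inl ℝ (Euc n) (Euc d)).toLinearMap
        (S.orthogonalProjectionOnto ∘L fderiv ℝ Φ (xb, wb)).toLinearMap
  have hA : ContDiffAt ℝ 1 (fun p => fderiv ℝ Φ p ∘L ContinuousLinearMap.inl ℝ _ _) (xb, wb) :=
    (hΦ.fderiv_right le_rfl).clm_comp contDiffAt_const
  have hA' : HasFDerivAt (fun p => fderiv ℝ Φ p ∘L ContinuousLinearMap.inl ℝ _ _)
      (ContinuousLinearMap.precomp F (ContinuousLinearMap.inl ℝ _ _) ∘L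
        fderiv ℝ (fderiv ℝ Φ) (xb, wb)) (xb, wb) :=
    hasFDerivAt_clm_fderiv
      (ContinuousLinearMap.precomp F (ContinuousLinearMap.inl ℝ (Euc n) (Euc d))) hΦ
  ext P
  rw [mem_coderivPartialSubdiffX_iff]
  refine (coprod_mem_limitingNormals_graph_adjoint_comp_iff
    (Ω := {q : F × F | q.2 ∈ subdiff θ q.1}) hΦ₁ hΦ' hsurj hA hA' hinj
    (eventually_mem_subdiff_iff_affineProj hθ hbot htop hsplit)
    (Γ := {q | q.2 ∈ partialSubdiffX (fun x w => θ (Φ (x, w))) q.1.1 q.1.2})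
    (eventually_mem_partialSubdiffX_comp_iff hθ hbot htop hΦ₁ hinj hsplit)).trans ?_
  exact exists_congr fun y => and_congr mem_sosd_iff.symm (forall_innerPair_eq_iff hΦ)

end MainTheorem

/-- Exact second-order chain rule for fully amenable compositions
`ψ = θ ∘ Φ` with CPWL outer function under the second-order qualification condition:
`(D*∂ₓψ)(xb,wb,qb)(u) = (∇²ₓₓ⟨vb,Φ⟩u, ∇²ₓ_w⟨vb,Φ⟩u) + (∇ₓΦ*, ∇_wΦ*) ∂²θ(zb,vb)(∇ₓΦ u)`. -/
theorem second_order_chain_rule_cpwl {n dd m l p : ℕ} (hl : 0 < l)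
    (a : Fin l → Euc m) (α : Fin l → ℝ) (d : Fin p → Euc m) (β : Fin p → ℝ)
    (hdom : (cpwlDom d β).Nonempty)
    (Φ : Euc n × Euc dd → Euc m) (xb : Euc n) (wb : Euc dd)
    (hΦ : ContDiffAt ℝ 2 Φ (xb, wb)) (hzb : Φ (xb, wb) ∈ cpwlDom d β)
    (hsoqc : (Spar (cpwlFun a α d β) (Φ (xb, wb)) : Set (Euc m)) ∩
        {y | ContinuousLinearMap.adjoint (fderiv ℝ (fun x => Φ (x, wb)) xb) y = 0} = {0})
    (qb : Euc n)
    (hqb : qb ∈ partialSubdiffX (fun x w => cpwlFun a α d β (Φ (x, w))) xb wb)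
    (vb : Euc m)
    (hvb : {v ∈ subdiff (cpwlFun a α d β) (Φ (xb, wb)) |
        ContinuousLinearMap.adjoint (fderiv ℝ (fun x => Φ (x, wb)) xb) v = qb} = {vb}) :
    ∀ u : Euc n,
      coderivPartialSubdiffX (fun x w => cpwlFun a α d β (Φ (x, w))) xb wb qb u =
        {P : Euc n × Euc dd |
          ∃ y ∈ sosd (cpwlFun a α d β) (Φ (xb, wb)) vb
              ((fderiv ℝ (fun x => Φ (x, wb)) xb) u),
            P = (hessXX (fun x w => ⟪vb, Φ (x, w)⟫) xb wb u +
                   ContinuousLinearMap.adjoint (fderiv ℝ (fun x => Φ (x, wb)) xb) y,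
                 ContinuousLinearMap.adjoint (hessWX (fun x w => ⟪vb, Φ (x, w)⟫) xb wb) u +
                   ContinuousLinearMap.adjoint (fderiv ℝ (fun w => Φ (xb, w)) wb) y)} := by
  intro u
  have : Nonempty (Fin l) := Fin.pos_iff_nonempty.1 hl
  obtain ⟨hvb, hvbq⟩ := hvb.superset rfl
  exact second_order_chain_rule_cpwl_general convex_epi_cpwlFun (fun _ => cpwlFun_ne_bot) hΦ
    (cpwlFun_ne_top hzb) (eventually_splitsAt_cpwlFun hzb hvb) hsoqc hvbq u
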